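/- Let ℓ ≥ 2, J ⊆ ℤ/ℓℤ, and let θ ∈ ℂ^(ℤ/ℓℤ) be J-standard with Σ_{i ∈ ℤ/ℓℤ} θ_i ≠ 0. Then d ∈ E_θ if and only if d = Res_ℓ(ν) + r·δ_ℓ for some integer r ≥ 0 and some partition ν that is both an ℓ-core and a J-core. -/

import Mathlib

namespace CM

/-- The (non-linear) action of the simple reflection `s_j` on `ℤ^(ℤ/ℓℤ)`. -/
def sInt (ℓ : ℕ) (j : ZMod ℓ) (d : ZMod ℓ → ℤ) : ZMod ℓ → ℤ := fun i =>
  if i = j then (if j = 0 then 1 else 0) + d (j + 1) + d (j - 1) - d j else d i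

/-- The linear action of the simple reflection `s_j` on `ℂ^(ℤ/ℓℤ)`.
For `i ≠ j` the coefficient of `θ j` is the number of arrows between `i` and `j`
(which is `2` when `ℓ = 2`). -/
def sC (ℓ : ℕ) (j : ZMod ℓ) (θ : ZMod ℓ → ℂ) : ZMod ℓ → ℂ := fun i =>
  if i = j then -θ j
  else θ i + ((if i = j - 1 then 1 else 0) + (if i = j + 1 then 1 else 0) : ℂ) * θ j

lemma sC_sC (ℓ : ℕ) (j : ZMod ℓ) (θ : ZMod ℓ → ℂ) : sC ℓ j (sC ℓ j θ) = θ := by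
  funext i
  by_cases h : i = j
  · subst h; simp [sC]
  · simp [sC, h]

/-- `s_j` as a bijection of `ℂ^(ℤ/ℓℤ)`. -/
def sPerm (ℓ : ℕ) (j : ZMod ℓ) : Equiv.Perm (ZMod ℓ → ℂ) :=
  ⟨sC ℓ j, sC ℓ j, fun θ => sC_sC ℓ j θ, fun θ => sC_sC ℓ j θ⟩

/-- The group generated by the operators `s_j`, `j ∈ ℤ/ℓℤ`. -/
def Wgrp (ℓ : ℕ) : Subgroup (Equiv.Perm (ZMod ℓ → ℂ)) :=
  Subgroup.closure (Set.range (sPerm ℓ))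

/-- The subgroup generated by the operators `s_j`, `j ∈ J`. -/
def WJ (ℓ : ℕ) (J : Set (ZMod ℓ)) : Subgroup (Equiv.Perm (ZMod ℓ → ℂ)) :=
  Subgroup.closure (sPerm ℓ '' J)

/-- `θ` is `J`-standard if its stabilizer in `W` is exactly `W_J`. -/
def JStandard (ℓ : ℕ) (J : Set (ZMod ℓ)) (θ : ZMod ℓ → ℂ) : Prop :=
  ∀ w ∈ Wgrp ℓ, ((w : (ZMod ℓ → ℂ) → (ZMod ℓ → ℂ)) θ = θ ↔ w ∈ WJ ℓ J)

/-- Transport along an equality of vertices. -/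
def castMap {ℓ : ℕ} (d : ZMod ℓ → ℕ) {i j : ZMod ℓ} (h : i = j) :
    (Fin (d i) → ℂ) →ₗ[ℂ] (Fin (d j) → ℂ) :=
  LinearMap.funLeft ℂ ℂ (Fin.cast (congrArg d h.symm))

/-- A framed `θ`-representation of the cyclic quiver with dimension vector `d`
(dimension `1` at the framing vertex `∞`).  The moment map relation at the vertex
`i + 1` reads `X_{i+1} ∘ Y_{i+1} - Y_i ∘ X_i + δ_{i+1,0} · x ∘ y = θ_{i+1} · id`. -/
structure FRep (ℓ : ℕ) (θ : ZMod ℓ → ℂ) (d : ZMod ℓ → ℕ) where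
  X : ∀ i : ZMod ℓ, (Fin (d (i + 1)) → ℂ) →ₗ[ℂ] (Fin (d i) → ℂ)
  Y : ∀ i : ZMod ℓ, (Fin (d i) → ℂ) →ₗ[ℂ] (Fin (d (i + 1)) → ℂ)
  x : ℂ →ₗ[ℂ] (Fin (d 0) → ℂ)
  y : (Fin (d 0) → ℂ) →ₗ[ℂ] ℂ
  rel : ∀ i : ZMod ℓ,
    X (i + 1) ∘ₗ Y (i + 1) - Y i ∘ₗ X i +
      (if h : i + 1 = (0 : ZMod ℓ) then castMap d h.symm ∘ₗ x ∘ₗ y ∘ₗ castMap d h else 0) =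
    θ (i + 1) • LinearMap.id

/-- A subrepresentation of a framed representation. -/
structure FSubrep {ℓ : ℕ} {θ : ZMod ℓ → ℂ} {d : ZMod ℓ → ℕ} (R : FRep ℓ θ d) where
  U : ∀ i : ZMod ℓ, Submodule ℂ (Fin (d i) → ℂ)
  Uinf : Submodule ℂ ℂ
  hX : ∀ i : ZMod ℓ, ∀ v ∈ U (i + 1), R.X i v ∈ U i
  hY : ∀ i : ZMod ℓ, ∀ v ∈ U i, R.Y i v ∈ U (i + 1)
  hx : ∀ z ∈ Uinf, R.x z ∈ U 0
  hy : ∀ v ∈ U 0, R.y v ∈ Uinf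

/-- A framed representation is simple if its only subrepresentations are zero and itself. -/
def FSimple {ℓ : ℕ} {θ : ZMod ℓ → ℂ} {d : ZMod ℓ → ℕ} (R : FRep ℓ θ d) : Prop :=
  ∀ S : FSubrep R,
    ((∀ i, S.U i = ⊥) ∧ S.Uinf = ⊥) ∨ ((∀ i, S.U i = ⊤) ∧ S.Uinf = ⊤)

/-- `E_θ`: the set of dimension vectors of simple framed `θ`-representations. -/
def Eset (ℓ : ℕ) (θ : ZMod ℓ → ℂ) : Set (ZMod ℓ → ℕ) :=
  {d | ∃ R : FRep ℓ θ d, FSimple R}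

/-- The `∞`-residue of a box. -/
def rsd (c : ℕ × ℕ) : ℤ := (c.2 : ℤ) - (c.1 : ℤ)

/-- The `ℓ`-residue of a box. -/
def res (ℓ : ℕ) (c : ℕ × ℕ) : ZMod ℓ := (rsd c : ZMod ℓ)

/-- `Res_ℓ(μ) ∈ ℤ^(ℤ/ℓℤ)`: the number of boxes of each `ℓ`-residue. -/
def Res (ℓ : ℕ) (μ : YoungDiagram) : ZMod ℓ → ℤ := fun i =>
  ((μ.cells.filter (fun c => res ℓ c = i)).card : ℤ)

/-- The constant vector `δ_ℓ = (1,…,1)`. -/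
def delta (ℓ : ℕ) : ZMod ℓ → ℤ := fun _ => 1

/-- A box is removable if deleting it leaves a Young diagram. -/
def IsRemovable (μ : YoungDiagram) (c : ℕ × ℕ) : Prop :=
  c ∈ μ.cells ∧ ∃ ν : YoungDiagram, ν.cells = μ.cells.erase c

/-- A box is addable if adjoining it yields a Young diagram. -/
def IsAddable (μ : YoungDiagram) (c : ℕ × ℕ) : Prop :=
  c ∉ μ.cells ∧ ∃ ν : YoungDiagram, ν.cells = insert c μ.cells

/-- One step: delete one removable box. -/
def RemoveStep (μ ν : YoungDiagram) : Prop :=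
  ∃ c, IsRemovable μ c ∧ ν.cells = μ.cells.erase c

/-- `ν` is obtainable from `μ` by successively deleting removable boxes. -/
def Obtainable (μ ν : YoungDiagram) : Prop :=
  Relation.ReflTransGen RemoveStep μ ν

/-- `λ` is an `ℓ`-core: no partition obtainable from `λ` by deleting removable boxes
differs from `λ` by exactly `ℓ` boxes of pairwise distinct `ℓ`-residues. -/
def IsCore (ℓ : ℕ) (lam : YoungDiagram) : Prop :=
  ¬ ∃ μ : YoungDiagram, Obtainable lam μ ∧ (lam.cells \ μ.cells).card = ℓ ∧
      Set.InjOn (res ℓ) ↑(lam.cells \ μ.cells)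

/-- One step of the `ℓ`-core process: delete (via removable-box deletions) `ℓ` boxes
of pairwise distinct `ℓ`-residues. -/
def CoreStep (ℓ : ℕ) (μ ν : YoungDiagram) : Prop :=
  Obtainable μ ν ∧ (μ.cells \ ν.cells).card = ℓ ∧
    Set.InjOn (res ℓ) ↑(μ.cells \ ν.cells)

/-- `ν` is the `ℓ`-core of `λ`: it is an `ℓ`-core reached from `λ` by the core process. -/
def ReachesCore (ℓ : ℕ) (lam ν : YoungDiagram) : Prop :=
  Relation.ReflTransGen (CoreStep ℓ) lam ν ∧ IsCore ℓ ν

/-- A `J`-removable box: a removable box whose `ℓ`-residue lies in `J`. -/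
def IsJRemovable (ℓ : ℕ) (J : Set (ZMod ℓ)) (μ : YoungDiagram) (c : ℕ × ℕ) : Prop :=
  IsRemovable μ c ∧ res ℓ c ∈ J

/-- A `J`-core: a partition with no `J`-removable boxes. -/
def IsJCore (ℓ : ℕ) (J : Set (ZMod ℓ)) (μ : YoungDiagram) : Prop :=
  ∀ c, ¬ IsJRemovable ℓ J μ c

/-- One step: delete one `J`-removable box. -/
def JRemoveStep (ℓ : ℕ) (J : Set (ZMod ℓ)) (μ ν : YoungDiagram) : Prop :=
  ∃ c, IsJRemovable ℓ J μ c ∧ ν.cells = μ.cells.erase c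

/-- `ν` is a `J`-core of `λ`, obtained by successively deleting `J`-removable boxes. -/
def JReaches (ℓ : ℕ) (J : Set (ZMod ℓ)) (lam ν : YoungDiagram) : Prop :=
  Relation.ReflTransGen (JRemoveStep ℓ J) lam ν ∧ IsJCore ℓ J ν

/-!
Both sides of the equivalence are read off from the affine weight `Λ₀ - ∑ i, d i • α i` and say that
its defect is nonnegative and that it pairs nonnegatively with the simple coroots in `J`.

Reflecting at a vertex preserves the defect, and a vector of nonnegative defect can be reflected,
always at a vertex of negative weight, to a constant vector `r • δ`; a vector of negative defect
would in this way reach one with a negative entry.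

*Representations.* If `θ j ≠ 0`, replacing the space at `j` by the kernel of the total map from its
neighbours turns a simple representation for `θ` into one for `s_j θ`.  If `θ j = 0`, the maps into
and out of `j` form a complex which simplicity makes exact at both ends, so the weight at `j` is
nonnegative.  Hence the defect of a simple representation is nonnegative.  Conversely, the descent
to `r • δ` only meets vertices with `θ j ≠ 0`: for `J`-standard `θ` the weight is nonnegative on all
positive real roots orthogonal to `θ`, and this property survives each reflection of the descent.
At `r • δ` a Calogero–Moser pair of size `r` with coupling constant `∑ i, θ i` gives a simple
representation.

*Partitions.* The weight of `Res_ℓ ν` at `j` counts the addable minus the removable boxes of residue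
`j`; adding that many boxes of residue `j` (removing them, if the count is negative) reflects
`Res_ℓ ν` at `j`.  Since a row of `rℓ` boxes realises `r • δ`, the residue vectors are exactly the
vectors of nonnegative defect.  A step towards the `ℓ`-core subtracts `δ`, which changes no weight.
As an `ℓ`-core has no removable rim hook of length `ℓ`, it cannot have both addable and removable
boxes of the same residue, so its weight at `j` is negative if and only if it has a removable box of
residue `j`.
-/

/-! ### The affine Cartan matrix and level-one weights -/

section Cartan

variable {ℓ : ℕ} {R : Type*} [CommRing R]

/-- The Cartan matrix of the cyclic quiver with `ℓ` vertices (affine type `A`), as an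
endomorphism of `R^(ℤ/ℓℤ)`. -/
def cartan : (ZMod ℓ → R) →ₗ[R] (ZMod ℓ → R) :=
  2 • LinearMap.id - LinearMap.funLeft R R (· + 1) - LinearMap.funLeft R R (· - 1)

lemma cartan_apply (f : ZMod ℓ → R) (i : ZMod ℓ) :
    cartan f i = 2 * f i - f (i + 1) - f (i - 1) := by
  simp [cartan, LinearMap.funLeft_apply]

@[simp]
lemma cartan_const (c : R) : cartan (fun _ : ZMod ℓ => c) = 0 := by
  ext i
  simp only [cartan_apply, Pi.zero_apply]
  ring

lemma cartan_intCast_comp (f : ZMod ℓ → ℤ) :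
    cartan (Int.cast ∘ f : ZMod ℓ → R) = Int.cast ∘ cartan f := by
  ext i
  simp [cartan_apply]

lemma one_ne_zero_of_two_le (hℓ : 2 ≤ ℓ) : (1 : ZMod ℓ) ≠ 0 :=
  have : Fact (1 < ℓ) := ⟨hℓ⟩
  one_ne_zero

lemma add_one_ne (hℓ : 2 ≤ ℓ) (j : ZMod ℓ) : j + 1 ≠ j := by
  simpa using one_ne_zero_of_two_le hℓ

lemma sub_one_ne (hℓ : 2 ≤ ℓ) (j : ZMod ℓ) : j - 1 ≠ j := by
  simpa using one_ne_zero_of_two_le hℓ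

lemma cartan_single_self (hℓ : 2 ≤ ℓ) (j : ZMod ℓ) (c : R) :
    cartan (Pi.single j c) j = 2 * c := by
  simp [cartan_apply, add_one_ne hℓ, sub_one_ne hℓ]

lemma apply_eq_apply_zero_of_add_one {α : Type*} {f : ZMod ℓ → α}
    (h : ∀ j, f (j + 1) = f j) (j : ZMod ℓ) : f j = f 0 := by
  simpa using (show Function.Periodic f 1 from h).int_mul_eq j.cast

variable [NeZero ℓ]

lemma sum_add_right {M : Type*} [AddCommMonoid M] (f : ZMod ℓ → M) (a : ZMod ℓ) :
    ∑ i, f (i + a) = ∑ i, f i :=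
  Equiv.sum_comp (Equiv.addRight a) f

lemma dotProduct_cartan_comm (f g : ZMod ℓ → R) : f ⬝ᵥ cartan g = cartan f ⬝ᵥ g := by
  have h₁ := sum_add_right (fun i => f (i - 1) * g i) 1
  have h₂ := sum_add_right (fun i => f i * g (i - 1)) 1
  simp only [add_sub_cancel_right] at h₁ h₂
  simp only [dotProduct, cartan_apply, mul_sub, sub_mul, Finset.sum_sub_distrib, h₁, ← h₂]
  simp only [mul_left_comm, mul_assoc, sub_right_comm]

lemma sum_cartan (f : ZMod ℓ → R) : ∑ i, cartan f i = 0 := by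
  have h := dotProduct_cartan_comm (fun _ => 1) f
  rw [cartan_const, zero_dotProduct] at h
  simpa [dotProduct] using h

lemma dotProduct_cartan_self (f : ZMod ℓ → R) :
    f ⬝ᵥ cartan f = ∑ i, (f (i + 1) - f i) ^ 2 := by
  have h₁ := sum_add_right (fun i => f i * f (i - 1)) 1
  have h₂ := sum_add_right (fun i => f i ^ 2) 1
  simp only [add_sub_cancel_right] at h₁
  have h₃ : ∑ i, (f (i + 1) - f i) ^ 2
      = ∑ i, f (i + 1) ^ 2 + ∑ i, f i ^ 2 - 2 * ∑ i, f (i + 1) * f i := by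
    simp only [Finset.mul_sum, ← Finset.sum_add_distrib, ← Finset.sum_sub_distrib]
    exact Finset.sum_congr rfl fun i _ => by ring
  rw [h₃, h₂, h₁]
  simp only [dotProduct, cartan_apply, mul_sub, Finset.sum_sub_distrib, ← h₁]
  simp only [Finset.mul_sum, ← Finset.sum_add_distrib, ← Finset.sum_sub_distrib]
  exact Finset.sum_congr rfl fun i _ => by ring

lemma dotProduct_cartan_self_add_single (hℓ : 2 ≤ ℓ) (f : ZMod ℓ → R) (j : ZMod ℓ) (c : R) :
    (f + Pi.single j c) ⬝ᵥ cartan (f + Pi.single j c)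
      = f ⬝ᵥ cartan f + 2 * c * cartan f j + 2 * c ^ 2 := by
  have h : f ⬝ᵥ cartan (Pi.single j c) = cartan f j * c := by
    rw [dotProduct_cartan_comm, dotProduct_single]
  rw [map_add, add_dotProduct, dotProduct_add, dotProduct_add, h, single_dotProduct,
    single_dotProduct, cartan_single_self hℓ]
  ring

lemma apply_eq_apply_zero_of_cartan_eq_zero {f : ZMod ℓ → ℤ} (h : cartan f = 0) (j : ZMod ℓ) :
    f j = f 0 := by
  have hsq : ∑ i, (f (i + 1) - f i) ^ 2 = 0 := by
    rw [← dotProduct_cartan_self, h, dotProduct_zero]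
  rw [Finset.sum_eq_zero_iff_of_nonneg fun i _ => sq_nonneg _] at hsq
  exact apply_eq_apply_zero_of_add_one
    (fun i => sub_eq_zero.1 (pow_eq_zero_iff two_ne_zero |>.1 (hsq i (Finset.mem_univ i)))) j

lemma sum_zmod_eq_sum_range {M : Type*} [AddCommMonoid M] (f : ZMod ℓ → M) :
    ∑ i, f i = ∑ k ∈ Finset.range ℓ, f k :=
  Finset.sum_bij' (fun i _ => i.val) (fun k _ => (k : ZMod ℓ))
    (fun i _ => Finset.mem_range.2 i.val_lt) (fun _ _ => Finset.mem_univ _)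
    (fun i _ => i.natCast_zmod_val) (fun _ hk => ZMod.val_cast_of_lt (Finset.mem_range.1 hk))
    (fun i _ => by rw [i.natCast_zmod_val])

lemma abs_sub_le_sum_sq (g : ℕ → ℤ) {m n : ℕ} (h : m ≤ n) :
    |g n - g m| ≤ ∑ k ∈ Finset.Ico m n, (g (k + 1) - g k) ^ 2 := by
  rw [← Finset.sum_Ico_sub g h]
  exact (Finset.abs_sum_le_sum_abs _ _).trans
    (Finset.sum_le_sum fun k _ => by rw [← sq_abs]; exact Int.le_self_sq _)

/-- Both arcs of the cycle joining `a` and `b` contribute at least `|f a - f b|`. -/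
lemma two_mul_sub_le_dotProduct_cartan (f : ZMod ℓ → ℤ) (a b : ZMod ℓ) :
    2 * (f a - f b) ≤ f ⬝ᵥ cartan f := by
  let g : ℕ → ℤ := fun k => f (k + b)
  have hn : (a - b).val ≤ ℓ := (a - b).val_lt.le
  have hsum : f ⬝ᵥ cartan f = ∑ k ∈ Finset.Ico 0 ℓ, (g (k + 1) - g k) ^ 2 := by
    rw [dotProduct_cartan_self, ← sum_add_right _ b, sum_zmod_eq_sum_range, Finset.range_eq_Ico]
    simp [g, add_right_comm]
  have hg₀ : g 0 = f b := by simp [g]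
  have hga : g (a - b).val = f a := by simp [g]
  have hgℓ : g ℓ = f b := by simp [g]
  rw [hsum, ← Finset.sum_Ico_consecutive _ (Nat.zero_le _) hn]
  have h₁ := (le_abs_self _).trans (abs_sub_le_sum_sq g (Nat.zero_le (a - b).val))
  have h₂ := (neg_le_abs _).trans (abs_sub_le_sum_sq g hn)
  rw [hg₀, hga] at h₁
  rw [hga, hgℓ] at h₂
  linarith

end Cartan

section Weight

variable {ℓ : ℕ}

/-- The weight `Λ₀ - ∑ i, d i • α i` attached to `d`, given by its pairings with the simple
coroots. -/
def weight (d : ZMod ℓ → ℤ) : ZMod ℓ → ℤ := Pi.single 0 1 - cartan d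

lemma weight_apply (d : ZMod ℓ → ℤ) (j : ZMod ℓ) :
    weight d j = (if j = 0 then 1 else 0) - cartan d j := by
  simp [weight, Pi.single_apply]

lemma sInt_eq_add_single (j : ZMod ℓ) (d : ZMod ℓ → ℤ) :
    sInt ℓ j d = d + Pi.single j (weight d j) := by
  ext i
  rcases eq_or_ne i j with rfl | h
  · simp only [sInt, if_true, Pi.add_apply, Pi.single_eq_same, weight_apply, cartan_apply]
    ring
  · simp [sInt, h]

lemma weight_sInt_self (hℓ : 2 ≤ ℓ) (j : ZMod ℓ) (d : ZMod ℓ → ℤ) :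
    weight (sInt ℓ j d) j = -weight d j := by
  have h : weight (sInt ℓ j d) j = weight d j - cartan (Pi.single j (weight d j)) j := by
    rw [sInt_eq_add_single]
    simp [weight, sub_sub]
  rw [h, cartan_single_self hℓ]
  ring

lemma sInt_sInt (hℓ : 2 ≤ ℓ) (j : ZMod ℓ) (d : ZMod ℓ → ℤ) : sInt ℓ j (sInt ℓ j d) = d := by
  rw [sInt_eq_add_single, weight_sInt_self hℓ, sInt_eq_add_single, add_assoc, ← Pi.single_add]
  simp

lemma weight_add_const (d : ZMod ℓ → ℤ) (r : ℤ) : weight (fun i => d i + r) = weight d := by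
  have h : cartan (fun i => d i + r) = cartan d + cartan (fun _ => r) :=
    map_add cartan d fun _ => r
  rw [weight, h, cartan_const, add_zero, weight]

lemma exists_eq_single_of_sum_eq_one {ι : Type*} [Fintype ι] [DecidableEq ι] {f : ι → ℤ}
    (hf : ∀ i, 0 ≤ f i) (hsum : ∑ i, f i = 1) : ∃ i, f = Pi.single i 1 := by
  obtain ⟨i, -, hi⟩ : ∃ i ∈ Finset.univ, 0 < f i := by
    refine Finset.exists_lt_of_sum_lt (f := 0) ?_
    simp [hsum]
  have hsplit := Finset.add_sum_erase Finset.univ f (Finset.mem_univ i)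
  have hrest : 0 ≤ ∑ k ∈ Finset.univ.erase i, f k := Finset.sum_nonneg fun k _ => hf k
  have hzero := (Finset.sum_eq_zero_iff_of_nonneg fun k _ => hf k).1
    (show ∑ k ∈ Finset.univ.erase i, f k = 0 by omega)
  refine ⟨i, funext fun k => ?_⟩
  rcases eq_or_ne k i with rfl | hk
  · rw [Pi.single_eq_same]
    omega
  · rw [Pi.single_eq_of_ne hk, hzero k (by simp [hk])]

variable [NeZero ℓ]

lemma sum_weight (d : ZMod ℓ → ℤ) : ∑ j, weight d j = 1 := by
  simp [weight_apply, sum_cartan]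

lemma sum_mul_weight (d : ZMod ℓ → ℤ) : ∑ j : ZMod ℓ, j * ((weight d j : ℤ) : ZMod ℓ) = 0 := by
  have hid : cartan (fun i : ZMod ℓ => i) = 0 := by
    ext i
    simp only [cartan_apply, Pi.zero_apply]
    ring
  have h := dotProduct_cartan_comm (fun i : ZMod ℓ => i) (Int.cast ∘ d)
  rw [hid, zero_dotProduct] at h
  simp only [dotProduct, cartan_intCast_comp, Function.comp_apply] at h
  simp [weight_apply, mul_sub, h]

/-- The entries of `weight d` are nonnegative integers with sum `1` and vanishing first moment
modulo `ℓ`, so `weight d` is the fundamental weight `Λ₀`. -/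
lemma eq_const_of_weight_nonneg {d : ZMod ℓ → ℤ} (h : ∀ j, 0 ≤ weight d j) (j : ZMod ℓ) :
    d j = d 0 := by
  obtain ⟨k, hk⟩ := exists_eq_single_of_sum_eq_one h (sum_weight d)
  have hmoment := sum_mul_weight d
  rw [hk, Finset.sum_eq_single k (fun i _ hi => by simp [hi]) (by simp)] at hmoment
  obtain rfl : k = 0 := by simpa using hmoment
  exact apply_eq_apply_zero_of_cartan_eq_zero (sub_eq_self.1 hk) j

/-- Twice the defect `⟨Λ₀, Λ₀⟩ - ⟨λ, λ⟩ = 2 d₀ - ⟨d, C d⟩` of the weight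
`λ = Λ₀ - ∑ i, d i • α i`; the doubling avoids a division. -/
def twiceDefect (d : ZMod ℓ → ℤ) : ℤ := 2 * d 0 - d ⬝ᵥ cartan d

lemma twiceDefect_sInt (hℓ : 2 ≤ ℓ) (j : ZMod ℓ) (d : ZMod ℓ → ℤ) :
    twiceDefect (sInt ℓ j d) = twiceDefect d := by
  rw [sInt_eq_add_single, twiceDefect, dotProduct_cartan_self_add_single hℓ, twiceDefect,
    weight_apply, Pi.add_apply, Pi.single_apply]
  simp only [eq_comm (a := (0 : ZMod ℓ))]
  split_ifs <;> ring

lemma twiceDefect_add_const (d : ZMod ℓ → ℤ) (r : ℤ) :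
    twiceDefect (fun i => d i + r) = twiceDefect d + 2 * r := by
  simp only [twiceDefect, dotProduct_cartan_self, add_sub_add_right_eq_sub]
  ring

lemma twiceDefect_const (r : ℤ) : twiceDefect (fun _ : ZMod ℓ => r) = 2 * r := by
  simp [twiceDefect]

lemma nonneg_of_twiceDefect_nonneg {d : ZMod ℓ → ℤ} (h : 0 ≤ twiceDefect d) (i : ZMod ℓ) :
    0 ≤ d i := by
  have := two_mul_sub_le_dotProduct_cartan d 0 i
  unfold twiceDefect at h
  omega

lemma toNat_sum_sInt_lt {d : ZMod ℓ → ℤ} {j : ZMod ℓ} (hj : weight d j < 0)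
    (hd : ∀ i, 0 ≤ sInt ℓ j d i) : (∑ i, sInt ℓ j d i).toNat < (∑ i, d i).toNat := by
  have hnonneg : 0 ≤ ∑ i, sInt ℓ j d i := Finset.sum_nonneg fun i _ => hd i
  have hsum : ∑ i, sInt ℓ j d i = ∑ i, d i + weight d j := by
    simp [sInt_eq_add_single, Finset.sum_add_distrib]
  omega

lemma twiceDefect_nonneg_of_closed (hℓ : 2 ≤ ℓ) {P : (ZMod ℓ → ℤ) → Prop}
    (hnonneg : ∀ d, P d → ∀ i, 0 ≤ d i)
    (hrefl : ∀ d j, P d → weight d j < 0 → P (sInt ℓ j d)) {d : ZMod ℓ → ℤ} (hd : P d) :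
    0 ≤ twiceDefect d := by
  induction hn : (∑ i, d i).toNat using Nat.strong_induction_on generalizing d with
  | _ n ih =>
  by_cases hneg : ∃ j, weight d j < 0
  · obtain ⟨j, hj⟩ := hneg
    have hd' := hrefl d j hd hj
    rw [← twiceDefect_sInt hℓ j]
    exact ih _ (hn ▸ toNat_sum_sInt_lt hj (hnonneg _ hd')) hd' rfl
  · push Not at hneg
    rw [funext (eq_const_of_weight_nonneg hneg), twiceDefect_const]
    have := hnonneg d hd 0
    omega

/-- Vectors of nonnegative defect are obtained from the constant vectors by simple reflections
that increase the total dimension. -/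
@[elab_as_elim]
lemma twiceDefect_induction (hℓ : 2 ≤ ℓ) {P : (ZMod ℓ → ℤ) → Prop}
    (const : ∀ r : ℕ, P fun _ => (r : ℤ))
    (reflect : ∀ d j, weight d j < 0 → P (sInt ℓ j d) → P d)
    (d : ZMod ℓ → ℤ) (hd : 0 ≤ twiceDefect d) : P d := by
  induction hn : (∑ i, d i).toNat using Nat.strong_induction_on generalizing d with
  | _ n ih =>
  by_cases hneg : ∃ j, weight d j < 0
  · obtain ⟨j, hj⟩ := hneg
    have hd' : 0 ≤ twiceDefect (sInt ℓ j d) := by rwa [twiceDefect_sInt hℓ]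
    exact reflect d j hj
      (ih _ (hn ▸ toNat_sum_sInt_lt hj (nonneg_of_twiceDefect_nonneg hd')) _ hd' rfl)
  · push Not at hneg
    obtain ⟨r, hr⟩ := Int.eq_ofNat_of_zero_le (nonneg_of_twiceDefect_nonneg hd 0)
    rw [funext (eq_const_of_weight_nonneg hneg), hr]
    exact const r

end Weight

/-! ### Real roots and the stabilizer condition -/

section RealRoot

variable {ℓ : ℕ}

lemma sC_eq_sub_smul_cartan (hℓ : 2 ≤ ℓ) (j : ZMod ℓ) (θ : ZMod ℓ → ℂ) :
    sC ℓ j θ = θ - θ j • cartan (Pi.single j 1) := by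
  ext i
  rcases eq_or_ne i j with rfl | h
  · simp only [sC, if_true, Pi.sub_apply, Pi.smul_apply, cartan_single_self hℓ, smul_eq_mul]
    ring
  · simp only [sC, h, if_false, Pi.sub_apply, Pi.smul_apply, cartan_apply, smul_eq_mul,
      Pi.single_apply, ← eq_sub_iff_add_eq, sub_eq_iff_eq_add (b := (1 : ZMod ℓ))]
    ring

lemma weight_sInt (j : ZMod ℓ) (d : ZMod ℓ → ℤ) :
    weight (sInt ℓ j d) = weight d - weight d j • cartan (Pi.single j 1) := by
  have h : Pi.single j (weight d j) = weight d j • Pi.single (M := fun _ => ℤ) j 1 := by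
    rw [← Pi.single_smul, smul_eq_mul, mul_one]
  rw [sInt_eq_add_single, h, weight, map_add, map_smul, ← sub_sub, ← weight]

/-- The simple reflection `s_j` on the root lattice. -/
def rootRefl (j : ZMod ℓ) (β : ZMod ℓ → ℤ) : ZMod ℓ → ℤ := β - Pi.single j (cartan β j)

/-- The real roots of the affine root system of type `A`, in simple-root coordinates: the orbit
of the simple roots under simple reflections. -/
inductive IsRealRoot : (ZMod ℓ → ℤ) → Prop
  | simple (j : ZMod ℓ) : IsRealRoot (Pi.single j 1)
  | refl (j : ZMod ℓ) (β : ZMod ℓ → ℤ) : IsRealRoot β → IsRealRoot (rootRefl j β)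

lemma intCast_comp_rootRefl {R : Type*} [CommRing R] (j : ZMod ℓ) (β : ZMod ℓ → ℤ) :
    (Int.cast ∘ rootRefl j β : ZMod ℓ → R)
      = Int.cast ∘ β - Pi.single j (cartan (Int.cast ∘ β) j) := by
  ext i
  simp [rootRefl, cartan_intCast_comp, Pi.single_apply]

lemma sC_cartan_intCast_comp (hℓ : 2 ≤ ℓ) (j : ZMod ℓ) (β : ZMod ℓ → ℤ) :
    sC ℓ j (cartan (Int.cast ∘ β)) = cartan (Int.cast ∘ rootRefl j β) := by
  rw [intCast_comp_rootRefl, map_sub, sC_eq_sub_smul_cartan hℓ, ← map_smul, ← Pi.single_smul,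
    smul_eq_mul, mul_one]

lemma apply_eq_self_of_mem_WJ {J : Set (ZMod ℓ)} {η : ZMod ℓ → ℂ} (hη : ∀ j ∈ J, η j = 0)
    {w : Equiv.Perm (ZMod ℓ → ℂ)} (hw : w ∈ WJ ℓ J) : w η = η := by
  have hle : WJ ℓ J ≤ MulAction.stabilizer (Equiv.Perm (ZMod ℓ → ℂ)) η := by
    rw [WJ, Subgroup.closure_le]
    rintro _ ⟨j, hj, rfl⟩
    refine funext fun i => ?_
    rcases eq_or_ne i j with rfl | hi
    · simp [sPerm, sC, hη i hj]
    · simp [sPerm, sC, hi, hη j hj]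
  exact hle hw

lemma JStandard.apply_eq_zero {J : Set (ZMod ℓ)} {θ : ZMod ℓ → ℂ} (h : JStandard ℓ J θ)
    {j : ZMod ℓ} (hj : j ∈ J) : θ j = 0 := by
  have hfix := (h (sPerm ℓ j) (Subgroup.subset_closure ⟨j, rfl⟩)).2
    (Subgroup.subset_closure ⟨j, hj, rfl⟩)
  have hneg : -θ j = θ j := by simpa [sPerm, sC] using congrFun hfix j
  exact self_eq_neg.1 hneg.symm

lemma intCast_comp_single_one {R : Type*} [CommRing R] (j : ZMod ℓ) :
    (Int.cast ∘ Pi.single j 1 : ZMod ℓ → R) = Pi.single j 1 := by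
  ext i
  simp [Pi.single_apply]

variable [NeZero ℓ]

lemma sub_smul_cartan_dotProduct {R : Type*} [CommRing R] (f g : ZMod ℓ → R) (j : ZMod ℓ) :
    (f - f j • cartan (Pi.single j 1)) ⬝ᵥ g = f ⬝ᵥ (g - Pi.single j (cartan g j)) := by
  simp [sub_dotProduct, dotProduct_sub, ← dotProduct_cartan_comm]

lemma sC_dotProduct_intCast_comp (hℓ : 2 ≤ ℓ) (j : ZMod ℓ) (θ : ZMod ℓ → ℂ) (β : ZMod ℓ → ℤ) :
    sC ℓ j θ ⬝ᵥ (Int.cast ∘ β) = θ ⬝ᵥ (Int.cast ∘ rootRefl j β) := by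
  rw [sC_eq_sub_smul_cartan hℓ, sub_smul_cartan_dotProduct, intCast_comp_rootRefl]

lemma weight_sInt_dotProduct (j : ZMod ℓ) (d β : ZMod ℓ → ℤ) :
    weight (sInt ℓ j d) ⬝ᵥ β = weight d ⬝ᵥ rootRefl j β := by
  rw [weight_sInt, sub_smul_cartan_dotProduct, rootRefl]

lemma sum_sC (hℓ : 2 ≤ ℓ) (j : ZMod ℓ) (θ : ZMod ℓ → ℂ) : ∑ i, sC ℓ j θ i = ∑ i, θ i := by
  simp [sC_eq_sub_smul_cartan hℓ, ← Finset.mul_sum, sum_cartan]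

namespace IsRealRoot

variable {β : ZMod ℓ → ℤ}

lemma dotProduct_cartan_self (hℓ : 2 ≤ ℓ) (h : IsRealRoot β) : β ⬝ᵥ cartan β = 2 := by
  induction h with
  | simple j => simp [cartan_single_self hℓ]
  | refl j β _ ih =>
    rw [rootRefl, sub_eq_add_neg, ← Pi.single_neg, dotProduct_cartan_self_add_single hℓ, ih]
    ring

lemma nonneg_or_nonpos (hℓ : 2 ≤ ℓ) (h : IsRealRoot β) : 0 ≤ β ∨ β ≤ 0 := by
  simp only [Pi.le_def, Pi.zero_apply]
  by_contra! hmixed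
  obtain ⟨⟨b, hb⟩, ⟨a, ha⟩⟩ := hmixed
  have := two_mul_sub_le_dotProduct_cartan β a b
  rw [h.dotProduct_cartan_self hℓ] at this
  omega

lemma eq_simple_of_support_subset (hℓ : 2 ≤ ℓ) (h : IsRealRoot β) (hβ : 0 ≤ β) {j : ZMod ℓ}
    (hj : ∀ i, i ≠ j → β i = 0) : β = Pi.single j 1 := by
  have hsingle : β = Pi.single j (β j) := by
    ext i
    rcases eq_or_ne i j with rfl | hi
    · simp
    · simp [hi, hj i hi]
  have hnorm := h.dotProduct_cartan_self hℓ
  rw [hsingle, single_dotProduct, cartan_single_self hℓ] at hnorm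
  have hj₀ : 0 ≤ β j := hβ j
  have hone : β j = 1 := by nlinarith
  rw [hsingle, hone]

lemma rootRefl_nonneg (hℓ : 2 ≤ ℓ) (h : IsRealRoot β) (hβ : 0 ≤ β) {j : ZMod ℓ}
    (hne : β ≠ Pi.single j 1) : 0 ≤ rootRefl j β := by
  refine ((h.refl j).nonneg_or_nonpos hℓ).resolve_right fun hneg => hne ?_
  refine h.eq_simple_of_support_subset hℓ hβ fun i hi => le_antisymm ?_ (hβ i)
  simpa [rootRefl, hi] using hneg i

lemma exists_reflection (hℓ : 2 ≤ ℓ) (h : IsRealRoot β) :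
    ∃ w ∈ Wgrp ℓ, ∀ θ, w θ = θ - (θ ⬝ᵥ (Int.cast ∘ β)) • cartan (Int.cast ∘ β) := by
  have hsimple (j : ZMod ℓ) : sPerm ℓ j ∈ Wgrp ℓ := Subgroup.subset_closure ⟨j, rfl⟩
  induction h with
  | simple j =>
    refine ⟨sPerm ℓ j, hsimple j, fun θ => ?_⟩
    rw [intCast_comp_single_one, dotProduct_single_one, ← sC_eq_sub_smul_cartan hℓ]
    rfl
  | refl j β _ ih =>
    obtain ⟨w, hw, hwθ⟩ := ih
    refine ⟨sPerm ℓ j * w * sPerm ℓ j, mul_mem (mul_mem (hsimple j) hw) (hsimple j), fun θ => ?_⟩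
    have hlin (f g : ZMod ℓ → ℂ) (c : ℂ) : sC ℓ j (f - c • g) = sC ℓ j f - c • sC ℓ j g := by
      simp only [sC_eq_sub_smul_cartan hℓ, Pi.sub_apply, Pi.smul_apply, smul_eq_mul]
      module
    calc sC ℓ j (w (sC ℓ j θ))
      _ = sC ℓ j (sC ℓ j θ)
          - (sC ℓ j θ ⬝ᵥ (Int.cast ∘ β)) • sC ℓ j (cartan (Int.cast ∘ β)) := by rw [hwθ, hlin]
      _ = _ := by rw [sC_sC, sC_dotProduct_intCast_comp hℓ, sC_cartan_intCast_comp hℓ]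

end IsRealRoot

/-- The weight of `d` is nonnegative on every positive real root orthogonal to `θ`. -/
def DominantOnPerp (θ : ZMod ℓ → ℂ) (d : ZMod ℓ → ℤ) : Prop :=
  ∀ β, IsRealRoot β → 0 ≤ β → θ ⬝ᵥ (Int.cast ∘ β) = 0 → 0 ≤ weight d ⬝ᵥ β

namespace DominantOnPerp

variable {θ : ZMod ℓ → ℂ} {d : ZMod ℓ → ℤ} {j : ZMod ℓ}

lemma ne_zero (h : DominantOnPerp θ d) (hj : weight d j < 0) : θ j ≠ 0 := by
  intro hθ
  have := h (Pi.single j 1) (.simple j) (by simp) (by simp [intCast_comp_single_one, hθ])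
  rw [dotProduct_single_one] at this
  omega

lemma reflect (hℓ : 2 ≤ ℓ) (h : DominantOnPerp θ d) (hj : weight d j < 0) :
    DominantOnPerp (sC ℓ j θ) (sInt ℓ j d) := by
  intro β hβ hpos hperp
  by_cases hs : β = Pi.single j 1
  · rw [hs, dotProduct_single_one, weight_sInt_self hℓ]
    omega
  · rw [sC_dotProduct_intCast_comp hℓ] at hperp
    rw [weight_sInt_dotProduct]
    exact h _ (hβ.refl j) (hβ.rootRefl_nonneg hℓ hpos hs) hperp

end DominantOnPerp

lemma IsRealRoot.eq_zero_of_reflection_mem_WJ (hℓ : 2 ≤ ℓ) {β : ZMod ℓ → ℤ} (h : IsRealRoot β)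
    {J : Set (ZMod ℓ)} {w : Equiv.Perm (ZMod ℓ → ℂ)} (hw : w ∈ WJ ℓ J)
    (hwθ : ∀ θ, w θ = θ - (θ ⬝ᵥ (Int.cast ∘ β)) • cartan (Int.cast ∘ β))
    {k : ZMod ℓ} (hk : k ∉ J) : β k = 0 := by
  have hfix := apply_eq_self_of_mem_WJ (η := Pi.single k 1)
    (fun j hj => Pi.single_eq_of_ne (ne_of_mem_of_not_mem hj hk) 1) hw
  rw [hwθ, single_one_dotProduct, sub_eq_self, smul_eq_zero, cartan_intCast_comp] at hfix
  refine hfix.elim (fun h₀ => by simpa using h₀) fun hcartan => ?_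
  have hzero : cartan β = 0 := funext fun i => by simpa using congrFun hcartan i
  simpa [hzero] using h.dotProduct_cartan_self hℓ

lemma JStandard.dominantOnPerp (hℓ : 2 ≤ ℓ) {J : Set (ZMod ℓ)} {θ : ZMod ℓ → ℂ}
    (h : JStandard ℓ J θ) {d : ZMod ℓ → ℤ} (hd : ∀ j ∈ J, 0 ≤ weight d j) :
    DominantOnPerp θ d := by
  intro β hβ hpos hperp
  obtain ⟨w, hw, hwθ⟩ := hβ.exists_reflection hℓ
  have hwJ : w ∈ WJ ℓ J := (h w hw).1 (by rw [hwθ, hperp, zero_smul, sub_zero])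
  refine Finset.sum_nonneg fun i _ => ?_
  by_cases hi : i ∈ J
  · exact mul_nonneg (hd i hi) (hpos i)
  · rw [hβ.eq_zero_of_reflection_mem_WJ hℓ hwJ hwθ hi, mul_zero]

end RealRoot

/-! ### Representations on subspaces of an ambient space -/

universe u v

/-- A framed `θ`-representation whose vertex spaces `S i` are subspaces of one space `E`, so that
no transport between vertex spaces is needed.  As in `FRep`, `X i` maps `S (i + 1)` to `S i` and
`Y i` maps `S i` to `S (i + 1)`; their values outside the vertex spaces are irrelevant. -/
structure AmbientRep {ℓ : ℕ} {K : Type u} [Field K] (θ : ZMod ℓ → K) (E : Type v)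
    [AddCommGroup E] [Module K E] where
  S : ZMod ℓ → Submodule K E
  X : ZMod ℓ → E →ₗ[K] E
  Y : ZMod ℓ → E →ₗ[K] E
  x : E
  y : E →ₗ[K] K
  X_mem : ∀ i, ∀ v ∈ S (i + 1), X i v ∈ S i
  Y_mem : ∀ i, ∀ v ∈ S i, Y i v ∈ S (i + 1)
  x_mem : x ∈ S 0
  rel : ∀ i, ∀ v ∈ S i,
    X i (Y i v) - Y (i - 1) (X (i - 1) v) + (if i = 0 then y v • x else 0) = θ i • v

namespace AmbientRep

variable {ℓ : ℕ} {K : Type u} [Field K] {θ : ZMod ℓ → K} {E : Type v} [AddCommGroup E] [Module K E]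

/-- `U` is a subrepresentation of `R`; the proposition `P` encodes the subspace at the framing
vertex, which is the whole line if `P` holds and zero otherwise. -/
structure IsSubrep (R : AmbientRep θ E) (U : ZMod ℓ → Submodule K E) (P : Prop) : Prop where
  le : ∀ i, U i ≤ R.S i
  X_mem : ∀ i, ∀ v ∈ U (i + 1), R.X i v ∈ U i
  Y_mem : ∀ i, ∀ v ∈ U i, R.Y i v ∈ U (i + 1)
  x_mem : P → R.x ∈ U 0
  y_eq_zero : ¬P → ∀ v ∈ U 0, R.y v = 0

/-- Simplicity of a framed representation on an ambient space. -/
def IsSimple (R : AmbientRep θ E) : Prop :=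
  ∀ U P, R.IsSubrep U P → (U = ⊥ ∧ ¬P) ∨ (U = R.S ∧ P)

/-- The dimension vector of `R`, with integer entries so that Weyl group elements act on it. -/
noncomputable def dim (R : AmbientRep θ E) (i : ZMod ℓ) : ℤ := Module.finrank K (R.S i)

lemma isSubrep_bot (R : AmbientRep θ E) : R.IsSubrep ⊥ False where
  le _ := bot_le
  X_mem i v hv := by simp_all
  Y_mem i v hv := by simp_all
  x_mem := False.elim
  y_eq_zero _ v hv := by simp_all

lemma isSubrep_S (R : AmbientRep θ E) : R.IsSubrep R.S True where
  le _ := le_rfl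
  X_mem := R.X_mem
  Y_mem := R.Y_mem
  x_mem _ := R.x_mem
  y_eq_zero h := absurd trivial h

end AmbientRep

/-- `d` is the dimension vector of a simple framed `θ`-representation. -/
def IsSimpleDim {ℓ : ℕ} {K : Type u} [Field K] (θ : ZMod ℓ → K) (d : ZMod ℓ → ℤ) : Prop :=
  ∃ (E : Type u) (_ : AddCommGroup E) (_ : Module K E) (_ : FiniteDimensional K E)
    (R : AmbientRep θ E), R.IsSimple ∧ R.dim = d

namespace FRep

variable {ℓ : ℕ} {θ : ZMod ℓ → ℂ} {d : ZMod ℓ → ℕ}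

/-- The inclusion of the `i`-th vertex space into the direct sum of all vertex spaces. -/
abbrev incl (d : ZMod ℓ → ℕ) (i : ZMod ℓ) : (Fin (d i) → ℂ) →ₗ[ℂ] (∀ k, Fin (d k) → ℂ) :=
  LinearMap.single ℂ (fun k => Fin (d k) → ℂ) i

lemma incl_castMap {i j : ZMod ℓ} (h : i = j) (v : Fin (d i) → ℂ) :
    incl d j (castMap d h v) = incl d i v := by
  subst h
  rfl

lemma single_apply_eq_castMap {i j : ZMod ℓ} (h : i = j) (v : Fin (d i) → ℂ) :
    (Pi.single i v : ∀ k, Fin (d k) → ℂ) j = castMap d h v := by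
  subst h
  exact Pi.single_eq_same _ _

lemma rel_apply (R : FRep ℓ θ d) (i : ZMod ℓ) (v : Fin (d (i + 1)) → ℂ) :
    R.X (i + 1) (R.Y (i + 1) v) - R.Y i (R.X i v)
      + (if h : i + 1 = 0 then castMap d h.symm (R.x (R.y (castMap d h v))) else 0)
      = θ (i + 1) • v := by
  have h := LinearMap.congr_fun (R.rel i) v
  split_ifs with hi <;> simpa [hi] using h

lemma x_eq_smul (R : FRep ℓ θ d) (z : ℂ) : R.x z = z • R.x 1 := by
  rw [← map_smul, smul_eq_mul, mul_one]

/-- The direct sum of the vertex spaces of `R` as an ambient space. -/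
noncomputable def toAmbient (R : FRep ℓ θ d) : AmbientRep θ (∀ i, Fin (d i) → ℂ) where
  S i := LinearMap.range (incl d i)
  X i := incl d i ∘ₗ R.X i ∘ₗ LinearMap.proj (i + 1)
  Y i := incl d (i + 1) ∘ₗ R.Y i ∘ₗ LinearMap.proj i
  x := incl d 0 (R.x 1)
  y := R.y ∘ₗ LinearMap.proj 0
  X_mem _ _ _ := ⟨_, rfl⟩
  Y_mem _ _ _ := ⟨_, rfl⟩
  x_mem := ⟨_, rfl⟩
  rel i := by
    obtain ⟨k, rfl⟩ : ∃ k, i = k + 1 := ⟨i - 1, by simp⟩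
    rintro _ ⟨v, rfl⟩
    rw [add_sub_cancel_right, ← map_smul _ (θ (k + 1)), ← R.rel_apply, map_add, map_sub]
    split_ifs with hk
    · rw [incl_castMap, x_eq_smul R (R.y _), map_smul]
      simp [single_apply_eq_castMap hk]
    · simp

lemma toAmbient_dim (R : FRep ℓ θ d) : R.toAmbient.dim = fun i => (d i : ℤ) := by
  ext i
  have hinj : Function.Injective (incl d i) := LinearMap.ker_eq_bot.1 (LinearMap.ker_single ℂ _ i)
  rw [AmbientRep.dim, toAmbient, LinearMap.finrank_range_of_inj hinj, Module.finrank_fin_fun]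

/-- The pullback of a subrepresentation of `R.toAmbient` to the vertex spaces of `R`. -/
noncomputable def comapSubrep (R : FRep ℓ θ d) {U : ZMod ℓ → Submodule ℂ (∀ i, Fin (d i) → ℂ)}
    {P : Prop} [Decidable P] (hU : R.toAmbient.IsSubrep U P) : FSubrep R where
  U i := (U i).comap (incl d i)
  Uinf := if P then ⊤ else ⊥
  hX i v hv := by simpa [toAmbient] using hU.X_mem i _ hv
  hY i v hv := by simpa [toAmbient] using hU.Y_mem i _ hv
  hx z hz := by
    by_cases hP : P
    · rw [x_eq_smul, Submodule.mem_comap, map_smul]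
      exact (U 0).smul_mem z (hU.x_mem hP)
    · obtain rfl : z = 0 := by simpa [hP] using hz
      simp
  hy v hv := by
    by_cases hP : P
    · simp [hP]
    · simpa [hP, toAmbient] using hU.y_eq_zero hP _ hv

lemma isSimple_toAmbient {R : FRep ℓ θ d} (hR : FSimple R) : R.toAmbient.IsSimple := by
  classical
  intro U P hU
  have hmap (i : ZMod ℓ) : ((R.comapSubrep hU).U i).map (incl d i) = U i :=
    Submodule.map_comap_eq_self (hU.le i)
  rcases hR (R.comapSubrep hU) with ⟨hbot, hinf⟩ | ⟨htop, hinf⟩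
  · refine .inl ⟨funext fun i => ?_, fun hP => ?_⟩
    · rw [← hmap, hbot, Submodule.map_bot, Pi.bot_apply]
    · simp [comapSubrep, hP] at hinf
  · refine .inr ⟨funext fun i => ?_, ?_⟩
    · rw [← hmap, htop, Submodule.map_top]
      rfl
    · by_contra hP
      simp [comapSubrep, hP] at hinf

end FRep

namespace AmbientRep

variable {ℓ : ℕ} {θ : ZMod ℓ → ℂ} {E : Type v} [AddCommGroup E] [Module ℂ E] {d : ZMod ℓ → ℕ}

lemma symm_castMap {S : ZMod ℓ → Submodule ℂ E} (e : ∀ i, S i ≃ₗ[ℂ] (Fin (d i) → ℂ))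
    {i j : ZMod ℓ} (h : i = j) (v : Fin (d i) → ℂ) :
    ((e j).symm (castMap d h v) : E) = (e i).symm v := by
  subst h
  rfl

/-- The framed representation obtained from `R` by choosing coordinates on the vertex spaces. -/
noncomputable def toFRep (R : AmbientRep θ E) (e : ∀ i, R.S i ≃ₗ[ℂ] (Fin (d i) → ℂ)) :
    FRep ℓ θ d where
  X i := e i ∘ₗ (R.X i).restrict (R.X_mem i) ∘ₗ (e (i + 1)).symm
  Y i := e (i + 1) ∘ₗ (R.Y i).restrict (R.Y_mem i) ∘ₗ (e i).symm
  x := LinearMap.toSpanSingleton ℂ _ (e 0 ⟨R.x, R.x_mem⟩)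
  y := R.y ∘ₗ (R.S 0).subtype ∘ₗ (e 0).symm
  rel i := by
    refine LinearMap.ext fun v => (e (i + 1)).symm.injective (Subtype.ext ?_)
    have h := R.rel (i + 1) _ ((e (i + 1)).symm v).2
    rw [add_sub_cancel_right] at h
    simp only [LinearMap.smul_apply, LinearMap.id_apply, map_smul, Submodule.coe_smul]
    rw [← h]
    split_ifs with hi
    · simp [symm_castMap e]
    · simp

section toFRep

variable (R : AmbientRep θ E) (e : ∀ i, R.S i ≃ₗ[ℂ] (Fin (d i) → ℂ))

/-- The inverse of the coordinates `e i`, as a map into the ambient space. -/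
noncomputable abbrev chart (i : ZMod ℓ) : (Fin (d i) → ℂ) →ₗ[ℂ] E := (R.S i).subtype ∘ₗ (e i).symm

lemma chart_injective (i : ZMod ℓ) : Function.Injective (R.chart e i) :=
  Subtype.val_injective.comp (e i).symm.injective

lemma range_chart (i : ZMod ℓ) : LinearMap.range (R.chart e i) = R.S i := by
  rw [LinearMap.range_comp, LinearEquiv.range, Submodule.map_top, Submodule.range_subtype]

lemma isSubrep_map_chart (T : FSubrep (R.toFRep e)) :
    R.IsSubrep (fun i => (T.U i).map (R.chart e i)) (T.Uinf = ⊤) where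
  le i := LinearMap.map_le_range.trans_eq (R.range_chart e i)
  X_mem := by
    rintro i _ ⟨u, hu, rfl⟩
    exact ⟨_, T.hX i u hu, by simp [toFRep]⟩
  Y_mem := by
    rintro i _ ⟨u, hu, rfl⟩
    exact ⟨_, T.hY i u hu, by simp [toFRep]⟩
  x_mem h := ⟨_, T.hx 1 (h ▸ Submodule.mem_top), by simp [toFRep]⟩
  y_eq_zero := by
    rintro h _ ⟨u, hu, rfl⟩
    have hy := T.hy u hu
    rw [(eq_bot_or_eq_top T.Uinf).resolve_right h] at hy
    simpa [toFRep] using hy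

variable {R}

lemma fSimple_toFRep (hR : R.IsSimple) : FSimple (R.toFRep e) := by
  intro T
  have hinj (i : ZMod ℓ) := Submodule.map_injective_of_injective (R.chart_injective e i)
  rcases hR _ _ (R.isSubrep_map_chart e T) with ⟨hbot, hinf⟩ | ⟨htop, hinf⟩
  · refine .inl ⟨fun i => hinj i ?_, (eq_bot_or_eq_top T.Uinf).resolve_right hinf⟩
    rw [Submodule.map_bot]
    exact congrFun hbot i
  · refine .inr ⟨fun i => hinj i ?_, hinf⟩
    rw [Submodule.map_top, range_chart]
    exact congrFun htop i

end toFRep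

end AmbientRep

lemma mem_Eset_iff_isSimpleDim {ℓ : ℕ} {θ : ZMod ℓ → ℂ} {d : ZMod ℓ → ℕ} [NeZero ℓ] :
    d ∈ Eset ℓ θ ↔ IsSimpleDim θ fun i => (d i : ℤ) := by
  constructor
  · rintro ⟨R, hR⟩
    exact ⟨_, _, _, inferInstance, R.toAmbient, FRep.isSimple_toAmbient hR, R.toAmbient_dim⟩
  · rintro ⟨E, _, _, _, R, hR, hd⟩
    have hfin (i : ZMod ℓ) : Module.finrank ℂ (R.S i) = Module.finrank ℂ (Fin (d i) → ℂ) := by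
      simpa [AmbientRep.dim] using congrFun hd i
    exact ⟨R.toFRep fun i => LinearEquiv.ofFinrankEq _ _ (hfin i), AmbientRep.fSimple_toFRep _ hR⟩

/-! ### Subrepresentations seen from one vertex -/

section Finrank

open Module

variable {K : Type*} [Field K] {M N : Type*} [AddCommGroup M] [Module K M] [AddCommGroup N]
  [Module K N] [FiniteDimensional K M]

lemma finrank_submodule_prod [FiniteDimensional K N] (p : Submodule K M) (q : Submodule K N) :
    finrank K (p.prod q) = finrank K p + finrank K q := by
  have hrange : p.prod q = LinearMap.range (p.subtype.prodMap q.subtype) := by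
    rw [LinearMap.range_prodMap, Submodule.range_subtype, Submodule.range_subtype]
  rw [hrange, LinearMap.finrank_range_of_inj
    (Function.Injective.prodMap p.injective_subtype q.injective_subtype), finrank_prod]

lemma finrank_map_add_finrank_inf_ker (f : M →ₗ[K] N) (p : Submodule K M) :
    finrank K (p.map f) + finrank K ↥(p ⊓ LinearMap.ker f) = finrank K p := by
  rw [← (f.domRestrict p).finrank_range_add_finrank_ker, LinearMap.range_domRestrict,
    LinearMap.ker_domRestrict, ← Submodule.map_comap_subtype, Submodule.finrank_map_subtype_eq]

end Finrank

section Neighbours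

variable {ℓ : ℕ} {K : Type*} [Semiring K] {E : Type*} [AddCommMonoid E] [Module K E]

/-- The direct sum of the spaces at the vertices adjacent to `j`: the two neighbours in the cycle
and, for `j = 0`, the framing vertex, where `P` decides whether the whole line is taken. -/
def nbr (U : ZMod ℓ → Submodule K E) (P : Prop) (j : ZMod ℓ) : Submodule K (E × E × K) :=
  (U (j + 1)).prod ((U (j - 1)).prod (⨆ _ : j = 0 ∧ P, ⊤))

variable {U V : ZMod ℓ → Submodule K E} {P Q : Prop} {j : ZMod ℓ}

lemma mem_nbr {w : E × E × K} :
    w ∈ nbr U P j ↔ w.1 ∈ U (j + 1) ∧ w.2.1 ∈ U (j - 1) ∧ (¬(j = 0 ∧ P) → w.2.2 = 0) := by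
  by_cases h : j = 0 ∧ P <;> simp [nbr, Submodule.mem_prod, h]

lemma nbr_mono (h : ∀ i ≠ j, U i ≤ V i) (hℓ : 2 ≤ ℓ) (hPQ : P → Q) : nbr U P j ≤ nbr V Q j :=
  Submodule.prod_mono (h _ (add_one_ne hℓ j)) <| Submodule.prod_mono (h _ (sub_one_ne hℓ j)) <|
    iSup_const_mono fun hj => ⟨hj.1, hPQ hj.2⟩

lemma nbr_update (hℓ : 2 ≤ ℓ) (W : Submodule K E) :
    nbr (Function.update U j W) P j = nbr U P j := by
  rw [nbr, nbr, Function.update_of_ne (add_one_ne hℓ j), Function.update_of_ne (sub_one_ne hℓ j)]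

lemma nbr_bot_false : nbr (⊥ : ZMod ℓ → Submodule K E) False j = ⊥ := by
  simp [nbr]

end Neighbours

namespace AmbientRep

section Vertex

variable {ℓ : ℕ} {K : Type u} [Field K] {θ : ZMod ℓ → K} {E : Type v} [AddCommGroup E] [Module K E]
  (R : AmbientRep θ E) (j : ZMod ℓ)

/-- The total map into the vertex `j` from its neighbours, signed so that the moment map relation
at `j` becomes `incoming ∘ outgoing = θ j`. -/
noncomputable def incoming : (E × E × K) →ₗ[K] E :=
  (R.X j).coprod ((-R.Y (j - 1)).coprod (if j = 0 then LinearMap.toSpanSingleton K E R.x else 0))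

/-- The total map from the vertex `j` to its neighbours. -/
noncomputable def outgoing : E →ₗ[K] E × E × K :=
  (R.Y j).prod ((R.X (j - 1)).prod (if j = 0 then R.y else 0))

lemma incoming_apply (p : E × E × K) :
    R.incoming j p = R.X j p.1 - R.Y (j - 1) p.2.1 + (if j = 0 then p.2.2 • R.x else 0) := by
  unfold incoming
  split_ifs <;> simp [sub_eq_add_neg, add_assoc]

lemma outgoing_apply (v : E) :
    R.outgoing j v = (R.Y j v, R.X (j - 1) v, if j = 0 then R.y v else 0) := by
  unfold outgoing
  split_ifs <;> simp

variable {R j} {U : ZMod ℓ → Submodule K E} {P : Prop}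

lemma incoming_outgoing {v : E} (hv : v ∈ R.S j) : R.incoming j (R.outgoing j v) = θ j • v := by
  rw [← R.rel j v hv, incoming_apply, outgoing_apply]
  split_ifs <;> rfl

lemma IsSubrep.map_incoming_le (h : R.IsSubrep U P) : (nbr U P j).map (R.incoming j) ≤ U j := by
  rintro _ ⟨w, hw, rfl⟩
  obtain ⟨h₁, h₂, h₃⟩ := mem_nbr.1 hw
  have hY := h.Y_mem (j - 1) _ h₂
  rw [sub_add_cancel] at hY
  rw [incoming_apply]
  refine add_mem (sub_mem (h.X_mem j _ h₁) hY) ?_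
  split_ifs with hj
  · subst hj
    by_cases hP : P
    · exact Submodule.smul_mem _ _ (h.x_mem hP)
    · simp [h₃ fun h' => hP h'.2]
  · exact zero_mem _

lemma IsSubrep.outgoing_mem (h : R.IsSubrep U P) {v : E} (hv : v ∈ U j) :
    R.outgoing j v ∈ nbr U P j := by
  rw [mem_nbr, outgoing_apply]
  refine ⟨h.Y_mem j v hv, h.X_mem (j - 1) v (by rwa [sub_add_cancel]), fun hjP => ?_⟩
  refine ite_eq_right_iff.2 ?_
  rintro rfl
  exact h.y_eq_zero (fun hP => hjP ⟨rfl, hP⟩) v hv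

variable (R j U P) in
/-- The conditions on a subrepresentation that do not involve the space at the vertex `j`. -/
structure IsSubrepAway : Prop where
  le : ∀ i ≠ j, U i ≤ R.S i
  X_mem : ∀ i ≠ j, i + 1 ≠ j → ∀ v ∈ U (i + 1), R.X i v ∈ U i
  Y_mem : ∀ i ≠ j, i + 1 ≠ j → ∀ v ∈ U i, R.Y i v ∈ U (i + 1)
  x_mem : j ≠ 0 → P → R.x ∈ U 0
  y_eq_zero : j ≠ 0 → ¬P → ∀ v ∈ U 0, R.y v = 0

lemma IsSubrep.away (h : R.IsSubrep U P) : R.IsSubrepAway j U P where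
  le i _ := h.le i
  X_mem i _ _ := h.X_mem i
  Y_mem i _ _ := h.Y_mem i
  x_mem _ := h.x_mem
  y_eq_zero _ := h.y_eq_zero

lemma IsSubrepAway.isSubrep (h : R.IsSubrepAway j U P) (hle : U j ≤ R.S j)
    (hin : (nbr U P j).map (R.incoming j) ≤ U j)
    (hout : ∀ v ∈ U j, R.outgoing j v ∈ nbr U P j) : R.IsSubrep U P where
  le i := by
    rcases eq_or_ne i j with rfl | hi
    exacts [hle, h.le i hi]
  X_mem i v hv := by
    rcases eq_or_ne i j with rfl | hi
    · simpa [incoming_apply] using hin ⟨(v, 0, 0), mem_nbr.2 (by simp [hv]), rfl⟩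
    rcases eq_or_ne (i + 1) j with rfl | hi'
    · simpa [outgoing_apply] using (mem_nbr.1 (hout v hv)).2.1
    · exact h.X_mem i hi hi' v hv
  Y_mem i v hv := by
    rcases eq_or_ne i j with rfl | hi
    · simpa [outgoing_apply] using (mem_nbr.1 (hout v hv)).1
    rcases eq_or_ne (i + 1) j with rfl | hi'
    · simpa [incoming_apply] using hin ⟨(0, -v, 0), mem_nbr.2 (by simpa using hv), rfl⟩
    · exact h.Y_mem i hi hi' v hv
  x_mem hP := by
    rcases eq_or_ne j 0 with rfl | hj
    · simpa [incoming_apply] using hin ⟨(0, 0, 1), mem_nbr.2 (by simp [hP]), rfl⟩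
    · exact h.x_mem hj hP
  y_eq_zero hP v hv := by
    rcases eq_or_ne j 0 with rfl | hj
    · simpa [outgoing_apply] using (mem_nbr.1 (hout v hv)).2.2 fun h' => hP h'.2
    · exact h.y_eq_zero hj hP v hv

lemma IsSubrepAway.update (h : R.IsSubrepAway j U P) (W : Submodule K E) :
    R.IsSubrepAway j (Function.update U j W) P where
  le i hi := by simpa [hi] using h.le i hi
  X_mem i hi hi' := by simpa [hi, hi'] using h.X_mem i hi hi'
  Y_mem i hi hi' := by simpa [hi, hi'] using h.Y_mem i hi hi'
  x_mem hj := by simpa [hj.symm] using h.x_mem hj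
  y_eq_zero hj := by simpa [hj.symm] using h.y_eq_zero hj

lemma IsSubrepAway.isSubrep_update (hℓ : 2 ≤ ℓ) (h : R.IsSubrepAway j U P) {W : Submodule K E}
    (hle : W ≤ R.S j) (hin : (nbr U P j).map (R.incoming j) ≤ W)
    (hout : ∀ v ∈ W, R.outgoing j v ∈ nbr U P j) : R.IsSubrep (Function.update U j W) P := by
  refine (h.update W).isSubrep ?_ ?_ ?_ <;>
    simpa only [nbr_update hℓ, Function.update_self]

lemma IsSimple.inf_ker_outgoing (hℓ : 2 ≤ ℓ) (hR : R.IsSimple) :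
    R.S j ⊓ LinearMap.ker (R.outgoing j) = ⊥ := by
  have hsub := R.isSubrep_bot.away.isSubrep_update (j := j)
    (W := R.S j ⊓ LinearMap.ker (R.outgoing j)) hℓ inf_le_left (by simp [nbr_bot_false])
    fun v hv => by simp [LinearMap.mem_ker.1 hv.2]
  obtain ⟨hbot, -⟩ := (hR _ _ hsub).resolve_right And.right
  simpa using congrFun hbot j

lemma IsSimple.map_incoming (hℓ : 2 ≤ ℓ) (hR : R.IsSimple) :
    (nbr R.S True j).map (R.incoming j) = R.S j := by
  have hle := R.isSubrep_S.map_incoming_le (j := j)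
  have hsub := R.isSubrep_S.away.isSubrep_update (j := j) hℓ hle le_rfl
    fun v hv => R.isSubrep_S.outgoing_mem (hle hv)
  obtain ⟨htop, -⟩ := (hR _ _ hsub).resolve_left fun h => h.2 trivial
  simpa using congrFun htop j

variable [FiniteDimensional K E]

lemma finrank_nbr_S : (Module.finrank K (nbr R.S True j) : ℤ)
    = R.dim (j + 1) + R.dim (j - 1) + (if j = 0 then 1 else 0) := by
  rw [nbr, finrank_submodule_prod, finrank_submodule_prod]
  split_ifs with hj
  · rw [iSup_pos ⟨hj, trivial⟩, finrank_top, Module.finrank_self, Nat.cast_add, Nat.cast_add,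
      Nat.cast_one, ← add_assoc, dim, dim]
  · simp [hj, dim]

lemma IsSimple.dim_add_finrank_inf_ker_incoming (hℓ : 2 ≤ ℓ) (hR : R.IsSimple) :
    R.dim j + Module.finrank K ↥(nbr R.S True j ⊓ LinearMap.ker (R.incoming j))
      = R.dim (j + 1) + R.dim (j - 1) + (if j = 0 then 1 else 0) := by
  rw [← finrank_nbr_S, ← finrank_map_add_finrank_inf_ker (R.incoming j) (nbr R.S True j),
    hR.map_incoming hℓ, Nat.cast_add, dim]

lemma IsSimple.weight_dim_nonneg (hℓ : 2 ≤ ℓ) (hR : R.IsSimple) (hj : θ j = 0) :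
    0 ≤ weight R.dim j := by
  have hmap : (R.S j).map (R.outgoing j) ≤ nbr R.S True j ⊓ LinearMap.ker (R.incoming j) := by
    rintro _ ⟨v, hv, rfl⟩
    refine ⟨R.isSubrep_S.outgoing_mem hv, ?_⟩
    rw [SetLike.mem_coe, LinearMap.mem_ker, incoming_outgoing hv, hj, zero_smul]
  have hinj := finrank_map_add_finrank_inf_ker (R.outgoing j) (R.S j)
  rw [hR.inf_ker_outgoing hℓ, finrank_bot, add_zero] at hinj
  have hrank := hR.dim_add_finrank_inf_ker_incoming (j := j) hℓ
  have hle : R.dim j ≤ Module.finrank K ↥(nbr R.S True j ⊓ LinearMap.ker (R.incoming j)) := by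
    rw [dim, ← hinj]
    exact_mod_cast Submodule.finrank_mono hmap
  rw [weight_apply, cartan_apply]
  linarith

end Vertex

end AmbientRep

lemma IsSimpleDim.weight_nonneg {ℓ : ℕ} {K : Type u} [Field K] {θ : ZMod ℓ → K} {d : ZMod ℓ → ℤ}
    {j : ZMod ℓ} (hℓ : 2 ≤ ℓ) (h : IsSimpleDim θ d) (hj : θ j = 0) : 0 ≤ weight d j := by
  obtain ⟨E, _, _, _, R, hR, rfl⟩ := h
  exact hR.weight_dim_nonneg hℓ hj

/-! ### The reflection functor -/

namespace AmbientRep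

variable {ℓ : ℕ} {K : Type u} [Field K] {θ : ZMod ℓ → K} {E : Type u} [AddCommGroup E] [Module K E]
  (R : AmbientRep θ E) (j : ZMod ℓ)

/-- The total map from the neighbours of `j` into the reflected vertex space, which is the kernel
of `incoming` on the sum of the neighbours. -/
noncomputable def reflIncoming : (E × E × K) →ₗ[K] E × E × K :=
  R.outgoing j ∘ₗ R.incoming j - θ j • LinearMap.id

lemma reflIncoming_apply (w : E × E × K) :
    R.reflIncoming j w = R.outgoing j (R.incoming j w) - θ j • w := rfl

lemma reflIncoming_eq_add (w : E × E × K) :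
    R.reflIncoming j w = R.reflIncoming j (w.1, 0) + R.reflIncoming j (0, w.2.1, 0)
      + w.2.2 • R.reflIncoming j (0, 0, 1) := by
  rw [← map_smul, ← map_add, ← map_add]
  simp

/-- The vertex spaces of the reflection of `R` at `j`, on the ambient space containing the
neighbours of `j`. -/
noncomputable def reflS : ZMod ℓ → Submodule K (E × E × K) :=
  Function.update (fun i => (R.S i).map (LinearMap.inl K E (E × K))) j
    (nbr R.S True j ⊓ LinearMap.ker (R.incoming j))

/-- The maps `X` of the reflection of `R` at `j`. -/
noncomputable def reflX (i : ZMod ℓ) : (E × E × K) →ₗ[K] E × E × K :=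
  if i = j then R.reflIncoming j ∘ₗ LinearMap.inl K E (E × K) ∘ₗ LinearMap.fst K E (E × K)
  else LinearMap.inl K E (E × K) ∘ₗ
    if i + 1 = j then LinearMap.fst K E K ∘ₗ LinearMap.snd K E (E × K)
    else R.X i ∘ₗ LinearMap.fst K E (E × K)

/-- The maps `Y` of the reflection of `R` at `j`. -/
noncomputable def reflY (i : ZMod ℓ) : (E × E × K) →ₗ[K] E × E × K :=
  if i = j then LinearMap.inl K E (E × K) ∘ₗ LinearMap.fst K E (E × K)
  else if i + 1 = j then
    -(R.reflIncoming j ∘ₗ LinearMap.inr K E (E × K) ∘ₗ LinearMap.inl K E K ∘ₗ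
      LinearMap.fst K E (E × K))
  else LinearMap.inl K E (E × K) ∘ₗ R.Y i ∘ₗ LinearMap.fst K E (E × K)

/-- The framing vector of the reflection of `R` at `j`. -/
noncomputable def reflVector : E × E × K :=
  if j = 0 then R.reflIncoming j (0, 0, 1) else (R.x, 0)

/-- The framing covector of the reflection of `R` at `j`. -/
noncomputable def reflCovector : (E × E × K) →ₗ[K] K :=
  if j = 0 then LinearMap.snd K E K ∘ₗ LinearMap.snd K E (E × K)
  else R.y ∘ₗ LinearMap.fst K E (E × K)

section Apply

variable {R j} {i : ZMod ℓ}

lemma reflS_self : R.reflS j j = nbr R.S True j ⊓ LinearMap.ker (R.incoming j) :=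
  Function.update_self _ _ _

lemma reflS_of_ne (hi : i ≠ j) : R.reflS j i = (R.S i).map (LinearMap.inl K E (E × K)) :=
  Function.update_of_ne hi _ _

lemma reflX_self (w : E × E × K) : R.reflX j j w = R.reflIncoming j (w.1, 0) := by
  simp [reflX]

lemma reflX_of_add_one_eq (hi : i ≠ j) (hi' : i + 1 = j) (w : E × E × K) :
    R.reflX j i w = (w.2.1, 0) := by
  simp [reflX, hi, hi']

lemma reflX_of_ne (hi : i ≠ j) (hi' : i + 1 ≠ j) (w : E × E × K) :
    R.reflX j i w = (R.X i w.1, 0) := by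
  simp [reflX, hi, hi']

lemma reflY_self (w : E × E × K) : R.reflY j j w = (w.1, 0) := by
  simp [reflY]

lemma reflY_of_add_one_eq (hi : i ≠ j) (hi' : i + 1 = j) (w : E × E × K) :
    R.reflY j i w = -R.reflIncoming j (0, w.1, 0) := by
  simp [reflY, hi, hi']

lemma reflY_of_ne (hi : i ≠ j) (hi' : i + 1 ≠ j) (w : E × E × K) :
    R.reflY j i w = (R.Y i w.1, 0) := by
  simp [reflY, hi, hi']

lemma reflIncoming_mem_reflS {w : E × E × K} (hw : w ∈ nbr R.S True j) :
    R.reflIncoming j w ∈ R.reflS j j := by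
  have hv : R.incoming j w ∈ R.S j := R.isSubrep_S.map_incoming_le ⟨w, hw, rfl⟩
  rw [reflS_self]
  refine ⟨sub_mem (R.isSubrep_S.outgoing_mem hv) (Submodule.smul_mem _ _ hw), ?_⟩
  rw [SetLike.mem_coe, LinearMap.mem_ker, reflIncoming_apply, map_sub, incoming_outgoing hv,
    map_smul, sub_self]

lemma reflIncoming_of_mem_reflS {w : E × E × K} (hw : w ∈ R.reflS j j) :
    R.reflIncoming j w = -θ j • w := by
  rw [reflS_self] at hw
  rw [reflIncoming_apply, LinearMap.mem_ker.1 hw.2, map_zero, zero_sub, neg_smul]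

lemma reflX_mem (hℓ : 2 ≤ ℓ) {w : E × E × K} (hw : w ∈ R.reflS j (i + 1)) :
    R.reflX j i w ∈ R.reflS j i := by
  rcases eq_or_ne i j with rfl | hi
  · rw [reflS_of_ne (add_one_ne hℓ i)] at hw
    obtain ⟨v, hv, rfl⟩ := hw
    rw [reflX_self]
    exact reflIncoming_mem_reflS (mem_nbr.2 (by simpa using hv))
  rw [reflS_of_ne hi]
  rcases eq_or_ne (i + 1) j with rfl | hi'
  · rw [reflS_self] at hw
    rw [reflX_of_add_one_eq hi rfl]
    exact ⟨_, by simpa using (mem_nbr.1 hw.1).2.1, rfl⟩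
  · rw [reflS_of_ne hi'] at hw
    obtain ⟨v, hv, rfl⟩ := hw
    rw [reflX_of_ne hi hi']
    exact ⟨_, R.X_mem i v hv, rfl⟩

lemma reflY_mem (hℓ : 2 ≤ ℓ) {w : E × E × K} (hw : w ∈ R.reflS j i) :
    R.reflY j i w ∈ R.reflS j (i + 1) := by
  rcases eq_or_ne i j with rfl | hi
  · rw [reflS_self] at hw
    rw [reflS_of_ne (add_one_ne hℓ i), reflY_self]
    exact ⟨_, (mem_nbr.1 hw.1).1, rfl⟩
  rw [reflS_of_ne hi] at hw
  obtain ⟨v, hv, rfl⟩ := hw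
  rcases eq_or_ne (i + 1) j with rfl | hi'
  · rw [reflY_of_add_one_eq hi rfl]
    exact neg_mem (reflIncoming_mem_reflS (mem_nbr.2 (by simpa using hv)))
  · rw [reflS_of_ne hi', reflY_of_ne hi hi']
    exact ⟨_, R.Y_mem i v hv, rfl⟩

lemma reflX_reflY (hi : i ≠ j) (v : E) : R.reflX j i (R.reflY j i (v, 0))
    = (R.X i (R.Y i v) + (if i + 1 = j then θ j else 0) • v, 0) := by
  rcases eq_or_ne (i + 1) j with rfl | hi'
  · rw [reflY_of_add_one_eq hi rfl, reflX_of_add_one_eq hi rfl]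
    simp [reflIncoming_apply, incoming_apply, outgoing_apply, add_comm]
  · rw [reflY_of_ne hi hi', reflX_of_ne hi hi']
    simp [hi']

lemma reflY_reflX (hi : i + 1 ≠ j) (v : E) : R.reflY j i (R.reflX j i (v, 0))
    = (R.Y i (R.X i v) - (if i = j then θ j else 0) • v, 0) := by
  rcases eq_or_ne i j with rfl | hi'
  · rw [reflX_self, reflY_self]
    simp [reflIncoming_apply, incoming_apply, outgoing_apply]
  · rw [reflX_of_ne hi' hi, reflY_of_ne hi' hi]
    simp [hi']

lemma sub_smul_cartan_single_of_ne (hi : i ≠ j) : (θ - θ j • cartan (Pi.single j 1) : ZMod ℓ → K) i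
    = θ i + (if i + 1 = j then θ j else 0) + (if i - 1 = j then θ j else 0) := by
  simp [cartan_apply, Pi.single_apply, hi, mul_add, sub_eq_add_neg,
    add_assoc, add_comm (if i + -1 = j then _ else _)]

lemma reflVector_zero : R.reflVector 0 = R.reflIncoming 0 (0, 0, 1) := if_pos rfl

lemma reflVector_of_ne (hj : j ≠ 0) : R.reflVector j = (R.x, 0) := if_neg hj

lemma reflCovector_zero (w : E × E × K) : R.reflCovector 0 w = w.2.2 := by
  simp [reflCovector]

lemma reflCovector_of_ne (hj : j ≠ 0) (w : E × E × K) : R.reflCovector j w = R.y w.1 := by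
  simp [reflCovector, hj]

lemma reflVector_mem : R.reflVector j ∈ R.reflS j 0 := by
  rcases eq_or_ne j 0 with rfl | hj
  · rw [reflVector_zero]
    exact reflIncoming_mem_reflS (mem_nbr.2 (by simp))
  · rw [reflVector_of_ne hj, reflS_of_ne hj.symm]
    exact ⟨_, R.x_mem, rfl⟩

lemma refl_rel_self (hℓ : 2 ≤ ℓ) {w : E × E × K} (hw : w ∈ R.reflS j j) :
    R.reflX j j (R.reflY j j w) - R.reflY j (j - 1) (R.reflX j (j - 1) w)
      + (if j = 0 then R.reflCovector j w • R.reflVector j else 0)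
      = (θ - θ j • cartan (Pi.single j 1) : ZMod ℓ → K) j • w := by
  have hθ : (θ - θ j • cartan (Pi.single j 1) : ZMod ℓ → K) j = -θ j := by
    simp only [Pi.sub_apply, Pi.smul_apply, cartan_single_self hℓ, smul_eq_mul]
    ring
  have hframe : (if j = 0 then R.reflCovector j w • R.reflVector j else 0)
      = w.2.2 • R.reflIncoming j (0, 0, 1) := by
    rw [reflS_self] at hw
    split_ifs with hj
    · rw [hj, reflCovector_zero, reflVector_zero]
    · rw [(mem_nbr.1 hw.1).2.2 fun h => hj h.1, zero_smul]
  rw [hθ, ← reflIncoming_of_mem_reflS hw, R.reflIncoming_eq_add j w, hframe, reflY_self, reflX_self,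
    reflX_of_add_one_eq (sub_one_ne hℓ j) (sub_add_cancel j 1),
    reflY_of_add_one_eq (sub_one_ne hℓ j) (sub_add_cancel j 1), sub_neg_eq_add]

lemma refl_rel_of_ne (hi : i ≠ j) {v : E} (hv : v ∈ R.S i) :
    R.reflX j i (R.reflY j i (v, 0)) - R.reflY j (i - 1) (R.reflX j (i - 1) (v, 0))
      + (if i = 0 then R.reflCovector j (v, 0) • R.reflVector j else 0)
      = (θ - θ j • cartan (Pi.single j 1) : ZMod ℓ → K) i • (v, 0) := by
  have hframe : (if i = 0 then R.reflCovector j (v, 0) • R.reflVector j else 0)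
      = (if i = 0 then R.y v • R.x else 0, 0) := by
    split_ifs with h₀
    · have hj : j ≠ 0 := fun h => hi (h₀.trans h.symm)
      rw [reflCovector_of_ne hj, reflVector_of_ne hj, Prod.smul_mk, smul_zero]
    · rfl
  rw [reflX_reflY hi, reflY_reflX (by rwa [sub_add_cancel]), hframe,
    sub_smul_cartan_single_of_ne hi, Prod.mk_sub_mk, Prod.mk_add_mk, Prod.smul_mk, smul_zero,
    sub_zero, add_zero, add_smul, add_smul, ← R.rel i v hv]
  congr 1
  abel

end Apply

/-- The reflection of `R` at `j`: the space at `j` is replaced by the kernel of `incoming`. -/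
noncomputable def reflect (hℓ : 2 ≤ ℓ) :
    AmbientRep (θ - θ j • cartan (Pi.single j 1)) (E × E × K) where
  S := R.reflS j
  X := R.reflX j
  Y := R.reflY j
  x := R.reflVector j
  y := R.reflCovector j
  X_mem _ _ := reflX_mem hℓ
  Y_mem _ _ := reflY_mem hℓ
  x_mem := reflVector_mem
  rel i w hw := by
    rcases eq_or_ne i j with rfl | hi
    · exact refl_rel_self hℓ hw
    · rw [reflS_of_ne hi] at hw
      obtain ⟨v, hv, rfl⟩ := hw
      exact refl_rel_of_ne hi hv

section Simple

variable {R j} {hℓ : 2 ≤ ℓ} {U : ZMod ℓ → Submodule K (E × E × K)} {P : Prop}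

lemma incoming_reflect {p : E × E × K} (hp : j ≠ 0 → p.2.2 = 0) :
    (R.reflect j hℓ).incoming j ((p.1, 0), (p.2.1, 0), p.2.2) = R.reflIncoming j p := by
  have hframe : (if j = 0 then p.2.2 • R.reflVector j else 0)
      = p.2.2 • R.reflIncoming j (0, 0, 1) := by
    split_ifs with hj
    · rw [hj, reflVector_zero]
    · rw [hp hj, zero_smul]
  rw [incoming_apply, reflIncoming_eq_add, ← hframe]
  simp only [reflect]
  rw [reflX_self, reflY_of_add_one_eq (sub_one_ne hℓ j) (sub_add_cancel j 1), sub_neg_eq_add]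

lemma outgoing_reflect (w : E × E × K) : (R.reflect j hℓ).outgoing j w
    = ((w.1, 0), (w.2.1, 0), if j = 0 then w.2.2 else 0) := by
  rw [outgoing_apply]
  simp only [reflect]
  rw [reflY_self, reflX_of_add_one_eq (sub_one_ne hℓ j) (sub_add_cancel j 1)]
  split_ifs with hj
  · rw [hj, reflCovector_zero]
  · rfl

variable (U) in
/-- The pullback of a family of subspaces to the original ambient space. -/
def comapInl (i : ZMod ℓ) : Submodule K E := (U i).comap (LinearMap.inl K E (E × K))

lemma IsSubrep.map_comapInl (hU : (R.reflect j hℓ).IsSubrep U P) {i : ZMod ℓ} (hi : i ≠ j) :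
    (comapInl U i).map (LinearMap.inl K E (E × K)) = U i := by
  refine Submodule.map_comap_eq_self ((hU.le i).trans ?_)
  simp only [reflect, reflS_of_ne hi]
  exact LinearMap.map_le_range

lemma IsSubrep.away_comapInl (hU : (R.reflect j hℓ).IsSubrep U P) :
    R.IsSubrepAway j (comapInl U) P where
  le i hi := by
    have hle := hU.le i
    simp only [reflect, reflS_of_ne hi, ← hU.map_comapInl hi] at hle
    rwa [Submodule.map_le_map_iff_of_injective LinearMap.inl_injective] at hle
  X_mem i hi hi' v hv := by simpa [comapInl, reflect, reflX_of_ne hi hi'] using hU.X_mem i _ hv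
  Y_mem i hi hi' v hv := by simpa [comapInl, reflect, reflY_of_ne hi hi'] using hU.Y_mem i _ hv
  x_mem hj hP := by simpa [comapInl, reflect, reflVector_of_ne hj] using hU.x_mem hP
  y_eq_zero hj hP v hv := by
    simpa [reflect, reflCovector_of_ne hj] using hU.y_eq_zero hP _ hv

lemma IsSubrep.reflIncoming_mem (hU : (R.reflect j hℓ).IsSubrep U P) {w : E × E × K}
    (hw : w ∈ nbr (comapInl U) P j) : R.reflIncoming j w ∈ U j := by
  obtain ⟨h₁, h₂, h₃⟩ := mem_nbr.1 hw
  rw [← incoming_reflect (hℓ := hℓ) fun hj => h₃ fun h => hj h.1]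
  exact hU.map_incoming_le ⟨((w.1, 0), (w.2.1, 0), w.2.2), mem_nbr.2 ⟨h₁, h₂, h₃⟩, rfl⟩

lemma IsSubrep.le_nbr_comapInl (hU : (R.reflect j hℓ).IsSubrep U P) :
    U j ≤ nbr (comapInl U) P j := by
  intro w hw
  have hout := hU.outgoing_mem hw
  rw [outgoing_reflect, mem_nbr] at hout
  refine mem_nbr.2 ⟨hout.1, hout.2.1, fun hjP => ?_⟩
  by_cases hj : j = 0
  · simpa [hj] using hout.2.2 hjP
  · have hle := hU.le j hw
    simp only [reflect, reflS_self] at hle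
    exact (mem_nbr.1 hle.1).2.2 fun h => hj h.1

lemma IsSubrep.isSubrep_update_comapInl (hU : (R.reflect j hℓ).IsSubrep U P) :
    R.IsSubrep (Function.update (comapInl U) j ((nbr (comapInl U) P j).map (R.incoming j))) P := by
  have hle := nbr_mono (P := P) (Q := True) hU.away_comapInl.le hℓ fun _ => trivial
  refine hU.away_comapInl.isSubrep_update hℓ ?_ le_rfl ?_
  · exact (Submodule.map_mono hle).trans R.isSubrep_S.map_incoming_le
  · rintro _ ⟨w, hw, rfl⟩
    have h := add_mem (hU.le_nbr_comapInl (hU.reflIncoming_mem hw))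
      (Submodule.smul_mem _ (θ j) hw)
    rwa [reflIncoming_apply, sub_add_cancel] at h

lemma IsSimple.reflect (hR : R.IsSimple) (hj : θ j ≠ 0) : (R.reflect j hℓ).IsSimple := by
  intro U P hU
  have hne {V : ZMod ℓ → Submodule K E} {W} (h : Function.update (comapInl U) j W = V)
      (i : ZMod ℓ) (hi : i ≠ j) : comapInl U i = V i := by
    rw [← h, Function.update_of_ne hi]
  rcases hR _ _ hU.isSubrep_update_comapInl with ⟨hbot, hP⟩ | ⟨htop, hP⟩
  · refine .inl ⟨funext fun i => ?_, hP⟩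
    rcases eq_or_ne i j with rfl | hi
    · have hle := hU.le_nbr_comapInl.trans (nbr_mono (fun k hk => (hne hbot k hk).le) hℓ hP)
      rwa [nbr_bot_false, le_bot_iff] at hle
    · rw [← hU.map_comapInl hi, hne hbot i hi]
      exact Submodule.map_bot _
  · refine .inr ⟨funext fun i => (hU.le i).antisymm ?_, hP⟩
    rcases eq_or_ne i j with rfl | hi
    · intro w hw
      have hnbr : nbr R.S True i ≤ nbr (comapInl U) P i :=
        nbr_mono (fun k hk => (hne htop k hk).ge) hℓ fun _ => hP
      have hmem := hU.reflIncoming_mem (hnbr (reflS_self.le hw).1)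
      rw [reflIncoming_of_mem_reflS hw] at hmem
      exact (Submodule.smul_mem_iff _ (neg_ne_zero.2 hj)).1 hmem
    · rw [← hU.map_comapInl hi, hne htop i hi]
      exact (reflS_of_ne hi).le

lemma IsSimple.dim_reflect [FiniteDimensional K E] (hR : R.IsSimple) :
    (R.reflect j hℓ).dim = sInt ℓ j R.dim := by
  ext i
  change (Module.finrank K (R.reflS j i) : ℤ) = _
  rcases eq_or_ne i j with rfl | hi
  · have hrank := hR.dim_add_finrank_inf_ker_incoming (j := i) hℓ
    rw [reflS_self, sInt, if_pos rfl]
    linarith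
  · rw [reflS_of_ne hi, sInt, if_neg hi, dim,
      ← (Submodule.equivMapOfInjective _ LinearMap.inl_injective (R.S i)).finrank_eq]

end Simple

end AmbientRep

lemma IsSimpleDim.reflect {ℓ : ℕ} {K : Type u} [Field K] {θ : ZMod ℓ → K} {d : ZMod ℓ → ℤ}
    {j : ZMod ℓ} (hℓ : 2 ≤ ℓ) (h : IsSimpleDim θ d) (hj : θ j ≠ 0) :
    IsSimpleDim (θ - θ j • cartan (Pi.single j 1)) (sInt ℓ j d) := by
  obtain ⟨E, _, _, _, R, hR, rfl⟩ := h
  exact ⟨E × E × K, _, _, inferInstance, R.reflect j hℓ, hR.reflect hj, hR.dim_reflect⟩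

/-! ### Calogero–Moser pairs -/

section CalogeroMoser

variable {ι K : Type*} [Field K]

/-- The Calogero–Moser matrix with positions `t` and coupling constant `c`.  The diagonal entries
vanish, since division by zero gives zero. -/
def caloMoser (t : ι → K) (c : K) : Matrix ι ι K := Matrix.of fun a b => c / (t b - t a)

variable {t : ι → K} {U : Submodule K (ι → K)}

lemma single_mem_of_mul_mem [Finite ι] [DecidableEq ι] (ht : Function.Injective t)
    (hU : ∀ v ∈ U, t * v ∈ U) {v : ι → K} (hv : v ∈ U) {a : ι} (ha : v a ≠ 0) :
    Pi.single a 1 ∈ U := by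
  cases nonempty_fintype ι
  have hmem : Polynomial.aeval t (Lagrange.basis Finset.univ t a) • v ∈ U :=
    Polynomial.aeval_apply_smul_mem_of_le_comap' hv _ t hU
  convert U.smul_mem (v a)⁻¹ hmem using 1
  ext b
  rcases eq_or_ne b a with rfl | hb
  · simp [Polynomial.aeval_fn_apply, Lagrange.eval_basis_self ht.injOn, ha]
  · simp [Polynomial.aeval_fn_apply, Lagrange.eval_basis_of_ne hb.symm, hb]

variable [Fintype ι]

lemma mul_caloMoser_sub_caloMoser_mul (ht : Function.Injective t) (c : K) (v : ι → K) :
    t * (caloMoser t c).mulVec v - (caloMoser t c).mulVec (t * v)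
      + (c * ∑ b, v b) • 1 = c • v := by
  ext a
  simp only [caloMoser, Pi.add_apply, Pi.sub_apply, Pi.mul_apply, Matrix.mulVec, dotProduct,
    Matrix.of_apply, Pi.smul_apply, Pi.one_apply, smul_eq_mul, mul_one, Finset.mul_sum,
    ← Finset.sum_sub_distrib, ← Finset.sum_add_distrib]
  rw [Finset.sum_eq_single a]
  · ring
  · intro b _ hb
    have hba : t b - t a ≠ 0 := sub_ne_zero.2 (ht.ne hb)
    field_simp
    ring
  · simp

lemma eq_bot_or_eq_top_of_caloMoser_mem {c : K} (ht : Function.Injective t) (hc : c ≠ 0)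
    (hT : ∀ v ∈ U, t * v ∈ U) (hZ : ∀ v ∈ U, (caloMoser t c).mulVec v ∈ U) : U = ⊥ ∨ U = ⊤ := by
  classical
  refine or_iff_not_imp_left.2 fun hne => ?_
  obtain ⟨v, hv, hv₀⟩ := U.ne_bot_iff.1 hne
  obtain ⟨a, ha⟩ := Function.ne_iff.1 hv₀
  have hsingle : Pi.single a 1 ∈ U := single_mem_of_mul_mem ht hT hv ha
  have hall (b : ι) : Pi.single b 1 ∈ U := by
    rcases eq_or_ne b a with rfl | hb
    · exact hsingle
    refine single_mem_of_mul_mem ht hT (hZ _ hsingle) ?_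
    simpa [caloMoser] using div_ne_zero hc (sub_ne_zero.2 (ht.ne hb.symm))
  rw [eq_top_iff, ← (Pi.basisFun K ι).span_eq, Submodule.span_le]
  rintro _ ⟨b, rfl⟩
  simpa using hall b

end CalogeroMoser

section PartialSums

variable {ℓ : ℕ}

/-- The partial sum `θ 0 + ⋯ + θ i`, for `0 ≤ i < ℓ`. -/
def partialSum {M : Type*} [AddCommMonoid M] (θ : ZMod ℓ → M) (i : ZMod ℓ) : M :=
  ∑ k ∈ Finset.range (i.val + 1), θ k

variable {M : Type*} [AddCommMonoid M] (θ : ZMod ℓ → M)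

lemma partialSum_zero : partialSum θ 0 = θ 0 := by
  simp [partialSum]

variable [NeZero ℓ]

lemma val_add_one_of_add_one_ne_zero {i : ZMod ℓ} (hi : i + 1 ≠ 0) : (i + 1).val = i.val + 1 := by
  have hne : i.val + 1 ≠ ℓ := fun h => hi <| by
    rw [← i.natCast_zmod_val, ← Nat.cast_succ, Nat.succ_eq_add_one, h, ZMod.natCast_self]
  have hval := ZMod.val_cast_of_lt (lt_of_le_of_ne i.val_lt hne)
  rwa [Nat.cast_succ, i.natCast_zmod_val] at hval

lemma le_of_val_le {α : Type*} [Preorder α] {f : ZMod ℓ → α}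
    (hf : ∀ i, i + 1 ≠ 0 → f (i + 1) ≤ f i) {i j : ZMod ℓ} (hij : i.val ≤ j.val) : f j ≤ f i := by
  suffices ∀ n, i.val ≤ n → n < ℓ → f n ≤ f i by simpa using this j.val hij j.val_lt
  refine Nat.le_induction (by simp) fun n _ ih hn => ?_
  refine le_trans ?_ (ih (by lia))
  rw [Nat.cast_succ]
  refine hf n fun h => ?_
  rw [← Nat.cast_succ, ZMod.natCast_eq_zero_iff] at h
  exact Nat.not_dvd_of_pos_of_lt n.succ_pos hn h

lemma val_le_val_neg_one (i : ZMod ℓ) : i.val ≤ (-1 : ZMod ℓ).val := by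
  obtain ⟨n, rfl⟩ := Nat.exists_eq_succ_of_ne_zero (NeZero.ne ℓ)
  rw [ZMod.val_neg_one]
  exact Nat.le_of_lt_succ i.val_lt

lemma partialSum_add_one {i : ZMod ℓ} (hi : i + 1 ≠ 0) :
    partialSum θ (i + 1) = partialSum θ i + θ (i + 1) := by
  rw [partialSum, val_add_one_of_add_one_ne_zero hi, Finset.sum_range_succ]
  simp [partialSum]

lemma partialSum_neg_one : partialSum θ (-1) = ∑ i, θ i := by
  obtain ⟨n, rfl⟩ := Nat.exists_eq_succ_of_ne_zero (NeZero.ne ℓ)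
  rw [partialSum, sum_zmod_eq_sum_range, ZMod.val_neg_one]

end PartialSums

section BaseRep

variable {ℓ : ℕ} {ι K : Type*} [Field K] (θ : ZMod ℓ → K) (t : ι → K)

/-- The maps `X` of the base representation: `X (-1)` is the multiplication by the positions `t`,
and the other ones are the identity. -/
noncomputable def baseX (i : ZMod ℓ) : (ι → K) →ₗ[K] ι → K :=
  if i + 1 = 0 then LinearMap.mulLeft K t else LinearMap.id

variable [NeZero ℓ] [Fintype ι]

/-- The maps `Y` of the base representation, built from the Calogero–Moser matrix. -/
noncomputable def baseY (i : ZMod ℓ) : (ι → K) →ₗ[K] ι → K :=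
  if i + 1 = 0 then (caloMoser t (∑ k, θ k)).mulVecLin
  else LinearMap.mulLeft K t ∘ₗ (caloMoser t (∑ k, θ k)).mulVecLin
    + (partialSum θ i - ∑ k, θ k) • LinearMap.id

lemma baseX_baseY (i : ZMod ℓ) (v : ι → K) : baseX t i (baseY θ t i v)
    = t * (caloMoser t (∑ k, θ k)).mulVec v + (partialSum θ i - ∑ k, θ k) • v := by
  by_cases hi : i + 1 = 0
  · simp [baseX, baseY, eq_neg_of_add_eq_zero_left hi, partialSum_neg_one]
  · simp [baseX, baseY, hi]

variable {t}

/-- The framed representation with all vertex spaces equal to `ι → K` made from the Calogero–Moser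
pair with coupling constant `∑ k, θ k`. -/
noncomputable def baseRep (ht : Function.Injective t) : AmbientRep θ (ι → K) where
  S _ := ⊤
  X := baseX t
  Y := baseY θ t
  x := 1
  y := (∑ k, θ k) • ∑ a, LinearMap.proj a
  X_mem _ _ _ := trivial
  Y_mem _ _ _ := trivial
  x_mem := trivial
  rel i v _ := by
    rw [baseX_baseY]
    rcases eq_or_ne i 0 with rfl | hi
    · have hcomm := mul_caloMoser_sub_caloMoser_mul ht (∑ k, θ k) v
      rw [partialSum_zero, sub_smul, ← hcomm]
      simp only [zero_sub, baseX, baseY, neg_add_cancel, if_true, Matrix.mulVecLin_apply,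
        LinearMap.mulLeft_apply, LinearMap.smul_apply, LinearMap.sum_apply, LinearMap.proj_apply,
        smul_eq_mul]
      abel
    · obtain ⟨k, rfl⟩ : ∃ k, i = k + 1 := ⟨i - 1, by simp⟩
      simp [baseX, baseY, hi, partialSum_add_one θ hi, sub_smul, add_smul]

variable {θ}

lemma isSimple_baseRep (ht : Function.Injective t) (ht₀ : ∀ a, t a ≠ 0) (hθ : ∑ k, θ k ≠ 0) :
    (baseRep θ ht).IsSimple := by
  intro U P hU
  have hstep (i : ZMod ℓ) (hi : i + 1 ≠ 0) : U (i + 1) ≤ U i := fun v hv => by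
    simpa [baseRep, baseX, hi] using hU.X_mem i v hv
  have hle (i : ZMod ℓ) : U i ≤ U 0 := le_of_val_le hstep (by simp)
  have hge (i : ZMod ℓ) : U (-1) ≤ U i := le_of_val_le hstep (val_le_val_neg_one i)
  have hT : (U 0).map (LinearMap.mulLeft K t) ≤ U (-1) := by
    rintro _ ⟨v, hv, rfl⟩
    simpa [baseRep, baseX] using hU.X_mem (-1) v (by simpa using hv)
  have hTinj : Function.Injective (LinearMap.mulLeft K t) :=
    (Pi.isUnit_iff.2 fun a => (ht₀ a).isUnit).isRegular.left
  have hneg : U (-1) = U 0 := by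
    refine Submodule.eq_of_le_of_finrank_le (hle _) ?_
    rw [(Submodule.equivMapOfInjective _ hTinj (U 0)).finrank_eq]
    exact Submodule.finrank_mono hT
  have heq : U = fun _ => U 0 := funext fun i => (hle i).antisymm (hneg ▸ hge i)
  have hZ (v) (hv : v ∈ U 0) : (caloMoser t (∑ k, θ k)).mulVec v ∈ U 0 := by
    simpa [baseRep, baseY] using hU.Y_mem (-1) v (hneg ▸ hv)
  rw [heq]
  have hVP := eq_bot_or_eq_top_of_caloMoser_mem ht hθ (fun v hv => hle _ (hT ⟨v, hv, rfl⟩)) hZ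
  by_cases hP : P
  · refine .inr ⟨funext fun _ => hVP.elim (fun hbot => ?_) id, hP⟩
    have h₁ := hU.x_mem hP
    rw [hbot, Submodule.mem_bot] at h₁
    exact eq_top_iff.2 fun v _ => by
      rw [← one_mul v, show (1 : ι → K) = 0 from h₁, zero_mul]
      exact zero_mem _
  · refine .inl ⟨funext fun _ => hVP.elim id fun htop => ?_, hP⟩
    classical
    refine eq_bot_iff.2 fun v _ => funext fun a => absurd ?_ hθ
    simpa [baseRep] using hU.y_eq_zero hP (Pi.single a 1) (htop ▸ trivial)

end BaseRep

lemma isSimpleDim_const {ℓ : ℕ} [NeZero ℓ] {K : Type u} [Field K] [CharZero K] {θ : ZMod ℓ → K}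
    (hθ : ∑ k, θ k ≠ 0) (r : ℕ) : IsSimpleDim θ fun _ => (r : ℤ) := by
  let t (k : Fin r) : K := (k : ℕ) + 1
  have ht : Function.Injective t := fun a b h => by simpa [t, Fin.ext_iff] using h
  refine ⟨Fin r → K, _, _, inferInstance, baseRep θ ht,
    isSimple_baseRep ht (fun k => Nat.cast_add_one_ne_zero k) hθ, funext fun i => ?_⟩
  rw [AmbientRep.dim, baseRep, finrank_top, Module.finrank_fin_fun]

/-! ### The dimension vectors of simple representations -/

section SimpleDim

variable {ℓ : ℕ} [NeZero ℓ] {J : Set (ZMod ℓ)} {θ : ZMod ℓ → ℂ}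

lemma IsSimpleDim.twiceDefect_nonneg {K : Type*} [Field K] {θ : ZMod ℓ → K} {d : ZMod ℓ → ℤ}
    (hℓ : 2 ≤ ℓ) (h : IsSimpleDim θ d) : 0 ≤ twiceDefect d := by
  refine twiceDefect_nonneg_of_closed (P := fun d => ∃ θ : ZMod ℓ → K, IsSimpleDim θ d) hℓ ?_ ?_
    ⟨θ, h⟩
  · rintro d ⟨θ, E, _, _, _, R, -, rfl⟩ i
    exact Nat.cast_nonneg _
  · rintro d j ⟨θ, h⟩ hj
    exact ⟨_, h.reflect hℓ fun hθ => hj.not_ge (h.weight_nonneg hℓ hθ)⟩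

lemma isSimpleDim_of_twiceDefect_nonneg (hℓ : 2 ≤ ℓ) (hθ : ∑ i, θ i ≠ 0) {d : ZMod ℓ → ℤ}
    (hd : 0 ≤ twiceDefect d) (hdom : DominantOnPerp θ d) : IsSimpleDim θ d := by
  revert θ
  refine twiceDefect_induction (P := fun d => ∀ {θ : ZMod ℓ → ℂ}, ∑ i, θ i ≠ 0 →
    DominantOnPerp θ d → IsSimpleDim θ d) hℓ (fun r θ hθ _ => isSimpleDim_const hθ r) ?_ d hd
  intro d j hj ih θ hθ hdom
  have hsC : IsSimpleDim (sC ℓ j θ) (sInt ℓ j d) :=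
    ih (by rwa [sum_sC hℓ]) (hdom.reflect hℓ hj)
  have hne : sC ℓ j θ j ≠ 0 := by simpa [sC] using hdom.ne_zero hj
  have h := hsC.reflect hℓ hne
  rwa [← sC_eq_sub_smul_cartan hℓ, sC_sC, sInt_sInt hℓ] at h

lemma JStandard.mem_Eset_iff (h : JStandard ℓ J θ) (hℓ : 2 ≤ ℓ) (hθ : ∑ i, θ i ≠ 0)
    (d : ZMod ℓ → ℕ) : d ∈ Eset ℓ θ ↔
      0 ≤ twiceDefect (fun i => (d i : ℤ)) ∧ ∀ j ∈ J, 0 ≤ weight (fun i => (d i : ℤ)) j := by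
  rw [mem_Eset_iff_isSimpleDim]
  exact ⟨fun hd => ⟨hd.twiceDefect_nonneg hℓ, fun j hj => hd.weight_nonneg hℓ (h.apply_eq_zero hj)⟩,
    fun hd => isSimpleDim_of_twiceDefect_nonneg hℓ hθ hd.1 (h.dominantOnPerp hℓ hd.2)⟩

end SimpleDim

/-! ### Diagonal profiles of Young diagrams -/

/-- The bead configuration (Maya diagram) of a diagonal profile `n`, shifted so that the empty
profile has a bead exactly at each negative position. -/
def bead (n : ℤ →₀ ℤ) (c : ℤ) : ℤ := n c - n (c + 1) + if c < 0 then 1 else 0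

/-- A profile `n` is the diagonal profile of a Young diagram when its bead configuration takes
only the values `0` and `1`. -/
def IsProfile (n : ℤ →₀ ℤ) : Prop := ∀ c, 0 ≤ bead n c ∧ bead n c ≤ 1

lemma IsProfile.antitone {n : ℤ →₀ ℤ} (h : IsProfile n) : Antitone fun c => n c - min c 0 := by
  refine antitone_int_of_succ_le fun c => ?_
  have := (h c).1
  rw [bead] at this
  split_ifs at this <;> omega

lemma IsProfile.monotone {n : ℤ →₀ ℤ} (h : IsProfile n) : Monotone fun c => n c + max c 0 := by
  refine monotone_int_of_le_succ fun c => ?_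
  have := (h c).2
  rw [bead] at this
  split_ifs at this <;> omega

lemma IsProfile.nonneg {n : ℤ →₀ ℤ} (h : IsProfile n) (c : ℤ) : 0 ≤ n c := by
  rcases le_total 0 c with hc | hc
  · obtain ⟨c', hcc', hc'⟩ := (Set.Ici_infinite c).exists_notMem_finset n.support
    have : n c' - min c' 0 ≤ n c - min c 0 := h.antitone hcc'
    rw [Finsupp.notMem_support_iff.1 hc', min_eq_right hc] at this
    linarith [min_le_right c' 0]
  · obtain ⟨c', hcc', hc'⟩ := (Set.Iic_infinite c).exists_notMem_finset n.support
    have : n c' + max c' 0 ≤ n c + max c 0 := h.monotone hcc'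
    rw [Finsupp.notMem_support_iff.1 hc', max_eq_right hc] at this
    linarith [le_max_right c' 0]

lemma sum_single_const_apply (S : Finset ℤ) (ε c : ℤ) :
    (∑ a ∈ S, Finsupp.single a ε) c = if c ∈ S then ε else 0 := by
  simp [Finsupp.single_apply]

lemma sum_single_one_apply {α β : Type*} [DecidableEq β] (s : Finset α) (f : α → β) (b : β) :
    (∑ a ∈ s, Finsupp.single (f a) (1 : ℤ)) b = ({a ∈ s | f a = b}.card : ℤ) := by
  simp [Finsupp.single_apply]

lemma mem_iff_lt_card_of_isLowerSet {s : Finset ℕ} (hs : IsLowerSet (s : Set ℕ)) (k : ℕ) :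
    k ∈ s ↔ k < s.card := by
  obtain ⟨m, hm⟩ := hs.eq_univ_or_Iio.resolve_left
    fun h => Set.infinite_univ (h ▸ s.finite_toSet)
  obtain rfl : s = Finset.range m := by simpa [← Finset.coe_inj] using hm
  simp

/-- The `k`-th box (counting from `0`) on the diagonal of content `c`. -/
def box (c : ℤ) (k : ℕ) : ℕ × ℕ := ((-c).toNat + k, c.toNat + k)

lemma rsd_box (c : ℤ) (k : ℕ) : rsd (box c k) = c := by
  simp only [rsd, box]
  omega

lemma min_box (c : ℤ) (k : ℕ) : min (box c k).1 (box c k).2 = k := by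
  simp only [box]
  omega

lemma box_rsd_min (p : ℕ × ℕ) : box (rsd p) (min p.1 p.2) = p := by
  ext <;> simp only [rsd, box] <;> omega

/-- The diagonal profile of a diagram: the number of boxes of each content. -/
noncomputable def diagProfile (ν : YoungDiagram) : ℤ →₀ ℤ :=
  ∑ p ∈ ν.cells, Finsupp.single (rsd p) 1

lemma diagProfile_apply (ν : YoungDiagram) (c : ℤ) :
    diagProfile ν c = ({p ∈ ν.cells | rsd p = c}.card : ℤ) :=
  sum_single_one_apply ..

lemma isLowerSet_setOf_box_mem (ν : YoungDiagram) (c : ℤ) : IsLowerSet {k | box c k ∈ ν.cells} :=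
  fun _ _ hba ha => ν.isLowerSet ⟨Nat.add_le_add_left hba _, Nat.add_le_add_left hba _⟩ ha

lemma box_mem_iff {ν : YoungDiagram} {c : ℤ} {k : ℕ} :
    box c k ∈ ν.cells ↔ (k : ℤ) < diagProfile ν c := by
  have hinj : Set.InjOn (fun p : ℕ × ℕ => min p.1 p.2) {p ∈ ν.cells | rsd p = c} := by
    intro p hp q hq hpq
    rw [← box_rsd_min p, ← box_rsd_min q, hp.2, hq.2]
    exact congrArg (box c) hpq
  set heights := {p ∈ ν.cells | rsd p = c}.image fun p => min p.1 p.2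
  have hmem (m : ℕ) : m ∈ heights ↔ box c m ∈ ν.cells := by
    simp only [heights, Finset.mem_image, Finset.mem_filter]
    constructor
    · rintro ⟨p, ⟨hp, rfl⟩, rfl⟩
      rwa [box_rsd_min]
    · exact fun h => ⟨_, ⟨h, rsd_box c m⟩, min_box c m⟩
  have hlower : IsLowerSet (heights : Set ℕ) := by
    convert isLowerSet_setOf_box_mem ν c using 1
    exact Set.ext hmem
  rw [← hmem, mem_iff_lt_card_of_isLowerSet hlower, diagProfile_apply, Nat.cast_lt,
    Finset.card_image_of_injOn (by simpa using hinj)]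

lemma mem_cells_iff {ν : YoungDiagram} {p : ℕ × ℕ} :
    p ∈ ν.cells ↔ ((min p.1 p.2 : ℕ) : ℤ) < diagProfile ν (rsd p) := by
  rw [← box_mem_iff, box_rsd_min]

lemma diagProfile_nonneg (ν : YoungDiagram) (c : ℤ) : 0 ≤ diagProfile ν c := by
  rw [diagProfile_apply]
  positivity

lemma lt_diagProfile_of_box_le {ν : YoungDiagram} {c c' : ℤ} {k k' : ℕ} (hle : box c k ≤ box c' k')
    (h : (k' : ℤ) < diagProfile ν c') : (k : ℤ) < diagProfile ν c :=
  box_mem_iff.1 (ν.isLowerSet hle (box_mem_iff.2 h))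

lemma isProfile_diagProfile (ν : YoungDiagram) : IsProfile (diagProfile ν) := by
  intro c
  have hc := diagProfile_nonneg ν c
  have hc' := diagProfile_nonneg ν (c + 1)
  lift diagProfile ν c to ℕ using hc with k hk
  lift diagProfile ν (c + 1) to ℕ using hc' with k' hk'
  simp only [bead, ← hk, ← hk']
  have down (i i' : ℕ) (hle : box c i ≤ box (c + 1) i') : i' < k' → i < k := by
    simpa only [← hk, ← hk', Nat.cast_lt] using lt_diagProfile_of_box_le (ν := ν) hle
  have up (i i' : ℕ) (hle : box (c + 1) i' ≤ box c i) : i < k → i' < k' := by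
    simpa only [← hk, ← hk', Nat.cast_lt] using lt_diagProfile_of_box_le (ν := ν) hle
  simp only [box, Prod.mk_le_mk] at down up
  split_ifs with hneg
  · have := down k (k + 1) (by omega)
    have := up k' k' (by omega)
    omega
  · have := down k k (by omega)
    have := up (k' + 1) k' (by omega)
    omega

lemma IsProfile.isLowerSet {n : ℤ →₀ ℤ} (h : IsProfile n) :
    IsLowerSet {p : ℕ × ℕ | ((min p.1 p.2 : ℕ) : ℤ) < n (rsd p)} := by
  rintro ⟨a', b'⟩ ⟨a, b⟩ ⟨ha, hb⟩ hp
  simp only [Set.mem_ofPred_eq] at ha hb hp ⊢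
  rcases le_total (rsd (a, b)) (rsd (a', b')) with hc | hc
  · have : n (rsd (a', b')) - min (rsd (a', b')) 0 ≤ n (rsd (a, b)) - min (rsd (a, b)) 0 :=
      h.antitone hc
    simp only [rsd] at *
    omega
  · have : n (rsd (a', b')) + max (rsd (a', b')) 0 ≤ n (rsd (a, b)) + max (rsd (a, b)) 0 :=
      h.monotone hc
    simp only [rsd] at *
    omega

lemma finite_setOf_min_lt (n : ℤ →₀ ℤ) :
    {p : ℕ × ℕ | ((min p.1 p.2 : ℕ) : ℤ) < n (rsd p)}.Finite := by
  refine (n.support.sigma fun c => Finset.range (n c).toNat).finite_toSet.image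
    (fun x => box x.1 x.2) |>.subset fun p hp => ?_
  refine ⟨⟨rsd p, min p.1 p.2⟩, ?_, box_rsd_min p⟩
  simp only [Set.mem_ofPred_eq] at hp
  simp only [Finset.coe_sigma, Set.mem_sigma_iff, Finset.mem_coe, Finsupp.mem_support_iff,
    Finset.mem_range]
  omega

lemma IsProfile.exists_diagProfile_eq {n : ℤ →₀ ℤ} (h : IsProfile n) :
    ∃ μ : YoungDiagram, diagProfile μ = n := by
  let μ : YoungDiagram :=
    { cells := (finite_setOf_min_lt n).toFinset
      isLowerSet := by simpa using h.isLowerSet }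
  refine ⟨μ, Finsupp.ext fun c => ?_⟩
  have key (k : ℕ) : (k : ℤ) < diagProfile μ c ↔ (k : ℤ) < n c := by
    rw [← box_mem_iff, Set.Finite.mem_toFinset, Set.mem_ofPred_eq, rsd_box, min_box]
  have hμ := key (diagProfile μ c).toNat
  have hn := key (n c).toNat
  have := diagProfile_nonneg μ c
  have := h.nonneg c
  omega

lemma le_of_diagProfile_le {μ ν : YoungDiagram} (h : diagProfile μ ≤ diagProfile ν) : μ ≤ ν :=
  YoungDiagram.cells_subset_iff.1 fun _ hp => mem_cells_iff.2 ((mem_cells_iff.1 hp).trans_le (h _))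

/-! ### Removing boxes -/

lemma exists_isRemovable_notMem {μ ν : YoungDiagram} (h : μ < ν) :
    ∃ p, IsRemovable ν p ∧ p ∉ μ.cells := by
  obtain ⟨p, hp, hmax⟩ := Finset.exists_max_image (ν.cells \ μ.cells) (fun p => p.1 + p.2)
    (Finset.sdiff_nonempty.2 (YoungDiagram.cells_ssubset_iff.2 h).2)
  rw [Finset.mem_sdiff] at hp
  refine ⟨p, ⟨hp.1, ⟨ν.cells.erase p, ?_⟩, rfl⟩, hp.2⟩
  intro a b hba ha
  rw [Finset.mem_coe, Finset.mem_erase] at ha ⊢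
  refine ⟨?_, ν.isLowerSet hba ha.2⟩
  rintro rfl
  have hsum := hmax a (Finset.mem_sdiff.2 ⟨ha.2, fun haμ => hp.2 (μ.isLowerSet hba haμ)⟩)
  obtain ⟨h₁, h₂⟩ := hba
  exact ha.1 (by ext <;> omega)

lemma obtainable_of_le {μ ν : YoungDiagram} (h : μ ≤ ν) : Obtainable ν μ := by
  induction hn : ν.cells.card using Nat.strong_induction_on generalizing ν with
  | _ n ih =>
    obtain rfl | hlt := h.eq_or_lt
    · exact Relation.ReflTransGen.refl
    · obtain ⟨p, hp, hpμ⟩ := exists_isRemovable_notMem hlt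
      obtain ⟨ν', hν'⟩ := hp.2
      have hcard : ν'.cells.card < n := by
        rw [hν', ← hn]
        exact Finset.card_erase_lt_of_mem hp.1
      have hle : μ ≤ ν' := by
        rw [← YoungDiagram.cells_subset_iff, hν', Finset.subset_erase]
        exact ⟨YoungDiagram.cells_subset_iff.2 h, hpμ⟩
      exact Relation.ReflTransGen.head ⟨p, hp, hν'⟩ (ih _ hcard hle rfl)

lemma Obtainable.le {μ ν : YoungDiagram} (h : Obtainable ν μ) : μ ≤ ν := by
  induction h with
  | refl => exact le_rfl
  | tail _ hstep ih =>
    obtain ⟨c, -, hc⟩ := hstep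
    exact (YoungDiagram.cells_subset_iff.1 (hc ▸ Finset.erase_subset _ _)).trans ih

section Strip

variable {μ ν : YoungDiagram} {S : Finset ℤ}

lemma mem_sdiff_iff_of_diagProfile_eq_add
    (h : diagProfile ν = diagProfile μ + ∑ c ∈ S, Finsupp.single c 1) {p : ℕ × ℕ} :
    p ∈ ν.cells \ μ.cells ↔
      rsd p ∈ S ∧ ((min p.1 p.2 : ℕ) : ℤ) = diagProfile μ (rsd p) := by
  rw [Finset.mem_sdiff, mem_cells_iff, mem_cells_iff, h, Finsupp.add_apply, sum_single_const_apply]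
  split_ifs with hp
  · simp only [hp, true_and]
    omega
  · simp only [hp, false_and, iff_false]
    omega

lemma le_of_diagProfile_eq_add
    (h : diagProfile ν = diagProfile μ + ∑ c ∈ S, Finsupp.single c 1) : μ ≤ ν := by
  refine le_of_diagProfile_le fun c => ?_
  rw [h, Finsupp.add_apply, sum_single_const_apply]
  split_ifs <;> omega

lemma injOn_rsd_sdiff (h : diagProfile ν = diagProfile μ + ∑ c ∈ S, Finsupp.single c 1) :
    Set.InjOn rsd (ν.cells \ μ.cells : Finset (ℕ × ℕ)) := by
  intro p hp q hq hpq
  have hp' := ((mem_sdiff_iff_of_diagProfile_eq_add h).1 hp).2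
  have hq' := ((mem_sdiff_iff_of_diagProfile_eq_add h).1 hq).2
  rw [hpq, ← hq', Nat.cast_inj] at hp'
  rw [← box_rsd_min p, ← box_rsd_min q, hpq, hp']

lemma image_rsd_sdiff (h : diagProfile ν = diagProfile μ + ∑ c ∈ S, Finsupp.single c 1) :
    (ν.cells \ μ.cells).image rsd = S := by
  ext c
  simp only [Finset.mem_image, mem_sdiff_iff_of_diagProfile_eq_add h]
  constructor
  · rintro ⟨p, ⟨hp, -⟩, rfl⟩
    exact hp
  · intro hc
    refine ⟨box c (diagProfile μ c).toNat, ?_, rsd_box ..⟩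
    rw [rsd_box, min_box, Int.toNat_of_nonneg (diagProfile_nonneg μ c)]
    exact ⟨hc, rfl⟩

end Strip

/-! ### Corners and residues -/

lemma bead_add (n m : ℤ →₀ ℤ) (c : ℤ) : bead (n + m) c = bead n c + m c - m (c + 1) := by
  simp only [bead, Finsupp.add_apply]
  ring

/-- The corner function of a profile, `corner n c = n (c + 1) + n (c - 1) - 2 * n c + δ_{c,0}`:
for the profile of a diagram it is `1`, `-1` or `0` according to whether the diagonal of content
`c` has an addable box, a removable box, or neither. -/
noncomputable def corner (n : ℤ →₀ ℤ) : ℤ →₀ ℤ :=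
  n.mapDomain (Equiv.addRight (-1)) + n.mapDomain (Equiv.addRight 1) - 2 • n + Finsupp.single 0 1

lemma mapDomain_addRight_apply {G M : Type*} [AddGroup G] [AddCommMonoid M] (n : G →₀ M)
    (a c : G) : n.mapDomain (Equiv.addRight a) c = n (c - a) := by
  rw [Finsupp.mapDomain_equiv_apply, sub_eq_add_neg]
  rfl

lemma corner_apply (n : ℤ →₀ ℤ) (c : ℤ) : corner n c = bead n (c - 1) - bead n c := by
  simp only [corner, Finsupp.add_apply, Finsupp.sub_apply, two_nsmul, mapDomain_addRight_apply,
    Finsupp.single_apply, bead, sub_add_cancel, sub_neg_eq_add]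
  split_ifs <;> omega

lemma IsProfile.corner_mem {n : ℤ →₀ ℤ} (h : IsProfile n) (c : ℤ) :
    -1 ≤ corner n c ∧ corner n c ≤ 1 := by
  have h₁ := h (c - 1)
  have h₂ := h c
  rw [corner_apply]
  omega

lemma IsProfile.add_sum_single {n : ℤ →₀ ℤ} (h : IsProfile n) {T : Finset ℤ} {ε : ℤ}
    (hT : ∀ c ∈ T, corner n c = ε) (hsep : ∀ c ∈ T, c + 1 ∉ T) :
    IsProfile (n + ∑ c ∈ T, Finsupp.single c ε) := by
  intro c
  rw [bead_add, sum_single_const_apply, sum_single_const_apply]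
  by_cases hc : c ∈ T
  · have hcorner := hT c hc
    rw [corner_apply] at hcorner
    rw [if_pos hc, if_neg (hsep c hc), ← hcorner]
    simpa using h (c - 1)
  by_cases hc' : c + 1 ∈ T
  · have hcorner := hT _ hc'
    rw [corner_apply, add_sub_cancel_right] at hcorner
    rw [if_neg hc, if_pos hc', ← hcorner]
    simpa using h (c + 1)
  · simpa [hc, hc'] using h c

lemma IsRemovable.diagProfile_eq_add {ν : YoungDiagram} {p : ℕ × ℕ} (h : IsRemovable ν p) :
    ∃ μ, diagProfile ν = diagProfile μ + Finsupp.single (rsd p) 1 := by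
  obtain ⟨hp, μ, hμ⟩ := h
  exact ⟨μ, by rw [diagProfile, diagProfile, hμ, Finset.sum_erase_add _ _ hp]⟩

lemma IsRemovable.bead_eq {ν : YoungDiagram} {p : ℕ × ℕ} (h : IsRemovable ν p) :
    bead (diagProfile ν) (rsd p - 1) = 0 ∧ bead (diagProfile ν) (rsd p) = 1 := by
  obtain ⟨μ, hμ⟩ := h.diagProfile_eq_add
  have hν₁ := isProfile_diagProfile ν (rsd p - 1)
  have hν₂ := isProfile_diagProfile ν (rsd p)
  have hμ₁ := isProfile_diagProfile μ (rsd p - 1)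
  have hμ₂ := isProfile_diagProfile μ (rsd p)
  simp only [hμ, bead_add, sub_add_cancel, Finsupp.single_eq_same,
    Finsupp.single_eq_of_ne (show rsd p - 1 ≠ rsd p by omega),
    Finsupp.single_eq_of_ne (show rsd p + 1 ≠ rsd p by omega)] at hν₁ hν₂ ⊢
  omega

lemma exists_isRemovable_of_corner_eq_neg_one {ν : YoungDiagram} {c : ℤ}
    (h : corner (diagProfile ν) c = -1) : ∃ p, IsRemovable ν p ∧ rsd p = c := by
  have hprofile := (isProfile_diagProfile ν).add_sum_single (T := {c}) (by simpa using h) (by simp)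
  obtain ⟨μ, hμ⟩ := hprofile.exists_diagProfile_eq
  have hν : diagProfile ν = diagProfile μ + ∑ c ∈ {c}, Finsupp.single c 1 := by
    simp [hμ]
  have hne : μ ≠ ν := by
    rintro rfl
    simp at hν
  obtain ⟨p, hp, hpμ⟩ := exists_isRemovable_notMem ((le_of_diagProfile_eq_add hν).lt_of_ne hne)
  refine ⟨p, hp, ?_⟩
  simpa using
    ((mem_sdiff_iff_of_diagProfile_eq_add hν).1 (Finset.mem_sdiff.2 ⟨hp.1, hpμ⟩)).1

section Residue

variable {ℓ : ℕ}

lemma Res_eq_mapDomain (ν : YoungDiagram) :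
    Res ℓ ν = (diagProfile ν).mapDomain (Int.cast : ℤ → ZMod ℓ) := by
  ext i
  simp only [diagProfile, Finsupp.mapDomain_finsetSum, Finsupp.mapDomain_single]
  exact (sum_single_one_apply ..).symm

lemma mapDomain_intCast_addRight (n : ℤ →₀ ℤ) (a : ℤ) (j : ZMod ℓ) :
    (n.mapDomain (Equiv.addRight a)).mapDomain (Int.cast : ℤ → ZMod ℓ) j =
      n.mapDomain (Int.cast : ℤ → ZMod ℓ) (j - a) := by
  have hcomm : (Int.cast : ℤ → ZMod ℓ) ∘ Equiv.addRight a =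
      Equiv.addRight (a : ZMod ℓ) ∘ Int.cast := by
    ext c
    simp
  rw [← Finsupp.mapDomain_comp, hcomm, Finsupp.mapDomain_comp, mapDomain_addRight_apply]

lemma weight_mapDomain (n : ℤ →₀ ℤ) (j : ZMod ℓ) :
    weight (n.mapDomain (Int.cast : ℤ → ZMod ℓ)) j =
      (corner n).mapDomain (Int.cast : ℤ → ZMod ℓ) j := by
  simp only [corner, Finsupp.mapDomain_add, Finsupp.mapDomain_sub, two_nsmul,
    Finsupp.add_apply, Finsupp.sub_apply, mapDomain_intCast_addRight, Finsupp.mapDomain_single,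
    weight_apply, cartan_apply, Finsupp.single_apply, Int.cast_zero, eq_comm (a := j)]
  push_cast
  rw [sub_neg_eq_add]
  ring

lemma weight_Res (ν : YoungDiagram) (j : ZMod ℓ) :
    weight (Res ℓ ν) j =
      ∑ c ∈ (corner (diagProfile ν)).support with Int.cast c = j, corner (diagProfile ν) c := by
  obtain ⟨a, rfl⟩ := ZMod.intCast_surjective j
  rw [Res_eq_mapDomain, weight_mapDomain, Finsupp.mapDomain_apply_eq_sum]

lemma exists_isRemovable_of_weight_neg {ν : YoungDiagram} {j : ZMod ℓ}
    (h : weight (Res ℓ ν) j < 0) : ∃ p, IsRemovable ν p ∧ res ℓ p = j := by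
  rw [weight_Res] at h
  obtain ⟨c, hc, hneg⟩ := Finset.exists_lt_of_sum_lt (h.trans_eq Finset.sum_const_zero.symm)
  have := (isProfile_diagProfile ν).corner_mem c
  obtain ⟨p, hp, rfl⟩ := exists_isRemovable_of_corner_eq_neg_one (ν := ν) (c := c) (by omega)
  exact ⟨p, hp, (Finset.mem_filter.1 hc).2⟩

lemma Res_nonneg (ν : YoungDiagram) (i : ZMod ℓ) : 0 ≤ Res ℓ ν i :=
  Nat.cast_nonneg _

lemma exists_subset_card_mul_eq_sum {α : Type*} (s : Finset α) (f : α → ℤ)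
    (hf : ∀ a ∈ s, -1 ≤ f a ∧ f a ≤ 1) :
    ∃ T ⊆ s, ∃ ε, (∀ a ∈ T, f a = ε) ∧ T.card * ε = ∑ a ∈ s, f a := by
  obtain ⟨ε, hε, hsum⟩ : ∃ ε : ℤ, (ε = 1 ∨ ε = -1) ∧ (∑ a ∈ s, f a).natAbs * ε = ∑ a ∈ s, f a := by
    rcases Int.natAbs_eq (∑ a ∈ s, f a) with h | h
    · exact ⟨1, .inl rfl, by omega⟩
    · exact ⟨-1, .inr rfl, by omega⟩
  have hcard : (∑ a ∈ s, f a).natAbs ≤ {a ∈ s | f a = ε}.card := by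
    have hle : ε * ∑ a ∈ s, f a ≤ ({a ∈ s | f a = ε}.card : ℤ) := by
      rw [Finset.mul_sum, Finset.card_filter, Nat.cast_sum]
      refine Finset.sum_le_sum fun a ha => ?_
      have := hf a ha
      rcases hε with rfl | rfl <;> split_ifs <;> push_cast <;> omega
    rcases hε with rfl | rfl <;> omega
  obtain ⟨T, hT, hTcard⟩ := Finset.exists_subset_card_eq hcard
  exact ⟨T, hT.trans (Finset.filter_subset _ _), ε, fun a ha => (Finset.mem_filter.1 (hT ha)).2,
    by rw [hTcard, hsum]⟩

lemma exists_Res_eq_add_single (hℓ : 2 ≤ ℓ) {ν : YoungDiagram} {j : ZMod ℓ} {T : Finset ℤ} {ε : ℤ}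
    (hres : ∀ c ∈ T, (c : ZMod ℓ) = j) (hcorner : ∀ c ∈ T, corner (diagProfile ν) c = ε) :
    ∃ μ, Res ℓ μ = Res ℓ ν + Pi.single j (T.card * ε) := by
  have hsep (c : ℤ) (hc : c ∈ T) : c + 1 ∉ T := fun hc' => by
    have := hres _ hc'
    rw [Int.cast_add, hres c hc, Int.cast_one] at this
    exact add_one_ne hℓ j this
  obtain ⟨μ, hμ⟩ :=
    ((isProfile_diagProfile ν).add_sum_single hcorner hsep).exists_diagProfile_eq
  have hmap : ∑ c ∈ T, Finsupp.single (c : ZMod ℓ) ε = Finsupp.single j (T.card * ε) := by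
    rw [Finset.sum_congr rfl fun c hc => by rw [hres c hc]]
    simp
  refine ⟨μ, ?_⟩
  simp only [Res_eq_mapDomain, hμ, Finsupp.mapDomain_add, Finsupp.mapDomain_finsetSum,
    Finsupp.mapDomain_single, hmap, Finsupp.coe_add, Finsupp.single_eq_pi_single]

lemma exists_Res_eq_sInt (hℓ : 2 ≤ ℓ) (ν : YoungDiagram) (j : ZMod ℓ) :
    ∃ μ, Res ℓ μ = sInt ℓ j (Res ℓ ν) := by
  obtain ⟨T, hT, ε, hcorner, hcard⟩ := exists_subset_card_mul_eq_sum
    {c ∈ (corner (diagProfile ν)).support | Int.cast c = j} (corner (diagProfile ν))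
    fun c _ => (isProfile_diagProfile ν).corner_mem c
  rw [← weight_Res] at hcard
  rw [sInt_eq_add_single, ← hcard]
  exact exists_Res_eq_add_single hℓ (fun c hc => (Finset.mem_filter.1 (hT hc)).2) hcorner

variable [NeZero ℓ]

lemma twiceDefect_Res_nonneg (hℓ : 2 ≤ ℓ) (ν : YoungDiagram) : 0 ≤ twiceDefect (Res ℓ ν) := by
  refine twiceDefect_nonneg_of_closed (P := (· ∈ Set.range (Res ℓ))) hℓ ?_ ?_ ⟨ν, rfl⟩
  · rintro _ ⟨μ, rfl⟩
    exact Res_nonneg μ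
  · rintro _ j ⟨μ, rfl⟩ -
    exact exists_Res_eq_sInt hℓ μ j

end Residue

lemma isProfile_sum_range_single (m : ℕ) :
    IsProfile (∑ k ∈ Finset.range m, Finsupp.single (k : ℤ) 1) := by
  have hsum : ∑ k ∈ Finset.range m, Finsupp.single (k : ℤ) (1 : ℤ) =
      ∑ c ∈ Finset.Ico (0 : ℤ) m, Finsupp.single c 1 := by
    refine (Finset.sum_map _ Nat.castEmbedding fun c => Finsupp.single c (1 : ℤ)).symm.trans ?_
    refine Finset.sum_congr (Finset.ext fun c => ?_) fun _ _ => rfl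
    simp only [Finset.mem_map, Finset.mem_range, Nat.castEmbedding_apply, Finset.mem_Ico]
    exact ⟨by rintro ⟨k, hk, rfl⟩; omega, fun h => ⟨c.toNat, by omega⟩⟩
  intro c
  simp only [bead, hsum, sum_single_const_apply, Finset.mem_Ico]
  split_ifs <;> omega

section Realization

variable {ℓ : ℕ} [NeZero ℓ]

lemma sum_range_mul_natCast {M : Type*} [AddCommMonoid M] (f : ZMod ℓ → M) (r : ℕ) :
    ∑ k ∈ Finset.range (r * ℓ), f k = r • ∑ i, f i := by
  induction r with
  | zero => simp
  | succ r ih =>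
    rw [Nat.succ_mul, Finset.sum_range_add, ih, succ_nsmul, sum_zmod_eq_sum_range]
    simp

lemma exists_Res_eq_const (r : ℕ) : ∃ ν : YoungDiagram, Res ℓ ν = fun _ => (r : ℤ) := by
  obtain ⟨ν, hν⟩ := (isProfile_sum_range_single (r * ℓ)).exists_diagProfile_eq
  refine ⟨ν, funext fun i => ?_⟩
  simp only [Res_eq_mapDomain, hν, Finsupp.mapDomain_finsetSum, Finsupp.mapDomain_single,
    Int.cast_natCast, sum_range_mul_natCast fun i => Finsupp.single i (1 : ℤ)]
  simp [Finsupp.single_apply]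

lemma exists_Res_eq (hℓ : 2 ≤ ℓ) {d : ZMod ℓ → ℤ} (hd : 0 ≤ twiceDefect d) :
    ∃ ν, Res ℓ ν = d := by
  refine twiceDefect_induction (P := fun d => ∃ ν, Res ℓ ν = d) hℓ exists_Res_eq_const ?_ d hd
  rintro d j - ⟨ν, hν⟩
  obtain ⟨μ, hμ⟩ := exists_Res_eq_sInt hℓ ν j
  exact ⟨μ, by rw [hμ, hν, sInt_sInt hℓ]⟩

end Realization

/-! ### Cores -/

section CoreStep

variable {ℓ : ℕ} [NeZero ℓ]

lemma CoreStep.Res_eq {μ ν : YoungDiagram} (h : CoreStep ℓ ν μ) (i : ZMod ℓ) :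
    Res ℓ ν i = Res ℓ μ i + 1 := by
  obtain ⟨hobt, hcard, hinj⟩ := h
  have himage : (ν.cells \ μ.cells).image (res ℓ) = Finset.univ :=
    Finset.eq_univ_of_card _ (by rw [Finset.card_image_of_injOn hinj, hcard, ZMod.card])
  obtain ⟨p, hp, rfl⟩ := Finset.mem_image.1 (himage ▸ Finset.mem_univ i)
  have hfiber : {q ∈ ν.cells \ μ.cells | res ℓ q = res ℓ p} = {p} := by
    ext q
    rw [Finset.mem_filter, Finset.mem_singleton]
    exact ⟨fun hq => hinj hq.1 hp hq.2, by rintro rfl; exact ⟨hp, rfl⟩⟩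
  rw [Res, ← Finset.sdiff_union_of_subset (YoungDiagram.cells_subset_iff.2 hobt.le),
    Finset.filter_union, hfiber, Finset.card_union_of_disjoint, Finset.card_singleton]
  · push_cast
    exact add_comm ..
  · rw [← hfiber]
    exact Finset.disjoint_filter_filter Finset.sdiff_disjoint

lemma exists_isCore_Res_eq_add (ν : YoungDiagram) :
    ∃ (r : ℕ) (μ : YoungDiagram), IsCore ℓ μ ∧ ∀ i, Res ℓ ν i = Res ℓ μ i + r := by
  induction hn : (Res ℓ ν 0).toNat using Nat.strong_induction_on generalizing ν with
  | _ n ih =>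
    by_cases hcore : IsCore ℓ ν
    · exact ⟨0, ν, hcore, by simp⟩
    · obtain ⟨μ, hμ⟩ := not_not.1 hcore
      have hstep := CoreStep.Res_eq hμ
      have := Res_nonneg μ (0 : ZMod ℓ)
      obtain ⟨r, κ, hκ, hres⟩ := ih _ (by have := hstep 0; omega) μ rfl
      exact ⟨r + 1, κ, hκ, fun i => by rw [hstep, hres]; push_cast; ring⟩

end CoreStep

lemma IsProfile.sub_sum_single_Icc {n : ℤ →₀ ℤ} (h : IsProfile n) {x y : ℤ} (hxy : x < y)
    (hx : bead n x = 0) (hy : bead n y = 1) :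
    IsProfile (n - ∑ c ∈ Finset.Icc (x + 1) y, Finsupp.single c 1) := by
  intro c
  have hc := h c
  rw [sub_eq_add_neg, bead_add, Finsupp.neg_apply, Finsupp.neg_apply, sum_single_const_apply,
    sum_single_const_apply]
  simp only [Finset.mem_Icc]
  obtain rfl | hcx := eq_or_ne c x
  · split_ifs <;> omega
  obtain rfl | hcy := eq_or_ne c y
  · split_ifs <;> omega
  · split_ifs <;> omega

lemma injOn_intCast_Icc (ℓ : ℕ) (x : ℤ) :
    Set.InjOn (Int.cast : ℤ → ZMod ℓ) (Set.Icc (x + 1) (x + ℓ)) := by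
  intro a ha b hb hab
  rw [ZMod.intCast_eq_intCast_iff_dvd_sub] at hab
  refine (sub_eq_zero.1 (Int.eq_zero_of_abs_lt_dvd hab ?_)).symm
  rw [abs_lt]
  constructor <;> linarith [ha.1, ha.2, hb.1, hb.2]

section Core

variable {ℓ : ℕ} {ν : YoungDiagram}

/- If a bead at `x + ℓ` could be moved to a vacant position `x`, the corresponding rim hook, whose
boxes have the `ℓ` consecutive contents `x + 1, …, x + ℓ`, could be removed. -/
lemma IsCore.bead_add_le (hℓ : 0 < ℓ) (h : IsCore ℓ ν) (x : ℤ) :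
    bead (diagProfile ν) (x + ℓ) ≤ bead (diagProfile ν) x := by
  by_contra! hlt
  have hprofile := isProfile_diagProfile ν
  have hx := hprofile x
  have hxℓ := hprofile (x + ℓ)
  obtain ⟨μ, hμ⟩ := (hprofile.sub_sum_single_Icc (x := x) (y := x + ℓ) (by omega) (by omega)
    (by omega)).exists_diagProfile_eq
  have hν := eq_add_of_sub_eq hμ.symm
  refine h ⟨μ, obtainable_of_le (le_of_diagProfile_eq_add hν), ?_, ?_⟩
  · rw [← Finset.card_image_of_injOn (injOn_rsd_sdiff hν), image_rsd_sdiff hν, Int.card_Icc]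
    omega
  · refine (injOn_intCast_Icc ℓ x).comp (injOn_rsd_sdiff hν) fun p hp => ?_
    simpa using ((mem_sdiff_iff_of_diagProfile_eq_add hν).1 hp).1

lemma IsCore.bead_le_bead (hℓ : 0 < ℓ) (h : IsCore ℓ ν) {x y : ℤ} (hxy : x ≤ y)
    (hres : (x : ZMod ℓ) = y) : bead (diagProfile ν) y ≤ bead (diagProfile ν) x := by
  obtain ⟨k, hk⟩ := (ZMod.intCast_eq_intCast_iff_dvd_sub ..).1 hres
  lift k to ℕ using by nlinarith
  obtain rfl : y = x + ℓ * k := by linarith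
  clear hxy hres hk
  induction k with
  | zero => simp
  | succ k ih =>
    refine le_trans ?_ ih
    rw [Nat.cast_succ, mul_add_one, ← add_assoc]
    exact h.bead_add_le hℓ _

lemma IsCore.corner_nonpos (hℓ : 0 < ℓ) (h : IsCore ℓ ν) {p : ℕ × ℕ} (hp : IsRemovable ν p) {c : ℤ}
    (hres : (c : ZMod ℓ) = res ℓ p) : corner (diagProfile ν) c ≤ 0 := by
  obtain ⟨hbead, hbead'⟩ := hp.bead_eq
  have hprofile := isProfile_diagProfile ν
  rw [corner_apply]
  rcases le_total c (rsd p) with hc | hc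
  · have := h.bead_le_bead hℓ hc hres
    have := hprofile (c - 1)
    omega
  · have := h.bead_le_bead hℓ (sub_le_sub_right hc 1) (by push_cast; rw [hres]; rfl)
    have := hprofile c
    omega

lemma IsCore.weight_Res_neg (hℓ : 0 < ℓ) (h : IsCore ℓ ν) {p : ℕ × ℕ} (hp : IsRemovable ν p) :
    weight (Res ℓ ν) (res ℓ p) < 0 := by
  obtain ⟨hbead, hbead'⟩ := hp.bead_eq
  have hneg : corner (diagProfile ν) (rsd p) < 0 := by
    rw [corner_apply]
    omega
  rw [weight_Res]
  refine Finset.sum_neg' (fun c hc => h.corner_nonpos hℓ hp (Finset.mem_filter.1 hc).2)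
    ⟨rsd p, ?_, hneg⟩
  rw [Finset.mem_filter, Finsupp.mem_support_iff]
  exact ⟨hneg.ne, rfl⟩

theorem exists_isCore_isJCore_iff [NeZero ℓ] (hℓ : 2 ≤ ℓ) (J : Set (ZMod ℓ)) (d : ZMod ℓ → ℤ) :
    (∃ (r : ℕ) (ν : YoungDiagram), IsCore ℓ ν ∧ IsJCore ℓ J ν ∧
        d = fun i => Res ℓ ν i + (r : ℤ) * delta ℓ i) ↔
      0 ≤ twiceDefect d ∧ ∀ j ∈ J, 0 ≤ weight d j := by
  simp only [delta, mul_one]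
  constructor
  · rintro ⟨r, ν, -, hJ, rfl⟩
    rw [twiceDefect_add_const, weight_add_const]
    refine ⟨by linarith [twiceDefect_Res_nonneg hℓ ν], fun j hj => ?_⟩
    by_contra! hneg
    obtain ⟨p, hp, rfl⟩ := exists_isRemovable_of_weight_neg hneg
    exact hJ p ⟨hp, hj⟩
  · rintro ⟨hdefect, hweight⟩
    obtain ⟨ν, rfl⟩ := exists_Res_eq hℓ hdefect
    obtain ⟨r, μ, hcore, hres⟩ := exists_isCore_Res_eq_add (ℓ := ℓ) ν
    refine ⟨r, μ, hcore, ?_, funext hres⟩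
    rintro p ⟨hp, hpJ⟩
    have hp' := hweight _ hpJ
    rw [funext hres, weight_add_const] at hp'
    exact (hcore.weight_Res_neg (by omega) hp).not_ge hp'

end Core

/-- For `θ` `J`-standard with `∑ θ_i ≠ 0`:
`d ∈ E_θ` iff `d = Res_ℓ(ν) + r·δ_ℓ` for some `r ≥ 0` and some partition `ν` which is
both an `ℓ`-core and a `J`-core. -/
theorem mem_Eset_iff_res_core (ℓ : ℕ) [NeZero ℓ] (hℓ : 2 ≤ ℓ) (J : Set (ZMod ℓ))
    (θ : ZMod ℓ → ℂ) (hst : JStandard ℓ J θ) (ha : ∑ i : ZMod ℓ, θ i ≠ 0)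
    (d : ZMod ℓ → ℕ) :
    d ∈ Eset ℓ θ ↔
      ∃ (r : ℕ) (ν : YoungDiagram), IsCore ℓ ν ∧ IsJCore ℓ J ν ∧
        (fun i => (d i : ℤ)) = fun i => Res ℓ ν i + (r : ℤ) * delta ℓ i := by
  rw [hst.mem_Eset_iff hℓ ha d, exists_isCore_isJCore_iff hℓ J]

end CM
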